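/- arXiv:1511.03810 — 3 statements merged into one kernel-verified Lean document; each statement's English description precedes it below -/
import Mathlib

section
/- Let K = ℚ(√−n) with n = p1⋯pk a squarefree positive integer such that all p_i ≡ 1 (mod 4), and let 2^{r1}·d1, 2^{r2}·d2 ∈ D(K) ∩ N(K^×) with d_i | n and r_i ∈ {0,1}. Let 2^r·d = (2^{r1}d1) ⊙ (2^{r2}d2) with d | n and r ∈ {0,1}. For i = 1, 2, let (a_i, b_i, c_i) be a primitive positive integer solution of 2^{r_i}·z² = d_i·x² + (n/d_i)·y², and set C_i = ([c_i/p_1], …, [c_i/p_k])^T ∈ F_2^k. Let 𝔡 be the product of the ramified prime ideals above the primes dividing d, multiplied by the r-th power of the ramified prime above 2, and let R be the Rédei matrix of K. Then [𝔡] ∈ 4A if and only if C_1 + C_2 lies in the column image of R. -/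
open NumberField
open scoped nonZeroDivisors

open Classical in
/-- The additive Legendre symbol `[a/p] ∈ F₂`: `0` if `a` is a square mod `p`, `1` otherwise. -/
noncomputable def aLeg (a : ℤ) (p : ℕ) : ZMod 2 :=
  if IsSquare ((a : ZMod p)) then 0 else 1

/-- The Rédei matrix of `ℚ(√−n)`, `n = p₁⋯p_k` with all `p_i ≡ 1 (mod 4)` (so `D = −4n`):
the `k × (k+1)` matrix over `F₂` with `r_{ij} = [p_j/p_i]` for `i ≠ j`,
`r_{ii} = [(D/p_i)/p_i]`, and last column `[2/p_i]`. -/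
noncomputable def redeiOfN (n k : ℕ) (p : Fin k → ℕ) :
    Matrix (Fin k) (Fin k ⊕ Unit) (ZMod 2) :=
  Matrix.of fun i j =>
    Sum.elim
      (fun j' : Fin k =>
        if i = j' then aLeg ((-4 * (n : ℤ)) / (p i : ℤ)) (p i) else aLeg (p j') (p i))
      (fun _ => aLeg 2 (p i)) j

theorem aLeg_mul {p : ℕ} [Fact p.Prime] (a b : ℤ) (ha : ¬ (p:ℤ) ∣ a) (hb : ¬ (p:ℤ) ∣ b) :
    aLeg (a * b) p = aLeg a p + aLeg b p := by
  have ha' : (a : ZMod p) ≠ 0 := by rwa [Ne, ZMod.intCast_zmod_eq_zero_iff_dvd]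
  have hb' : (b : ZMod p) ≠ 0 := by rwa [Ne, ZMod.intCast_zmod_eq_zero_iff_dvd]
  unfold aLeg
  push_cast
  by_cases h1 : IsSquare (a : ZMod p) <;> by_cases h2 : IsSquare (b : ZMod p)
  · simp [h1, h2, h1.mul h2]
  · have : ¬ IsSquare ((a : ZMod p) * b) := by
      intro h
      apply h2
      have := h.mul h1
      have h3 : (a : ZMod p) * b * a / (a^2) = b := by field_simp
      rw [← h3]
      exact this.div (IsSquare.sq _)
    simp [h1, h2, this]
  · have : ¬ IsSquare ((a : ZMod p) * b) := by
      intro h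
      apply h1
      have := h.mul h2
      have h3 : (a : ZMod p) * b * b / (b^2) = a := by field_simp
      rw [← h3]
      exact this.div (IsSquare.sq _)
    simp [h1, h2, this]
  · have : IsSquare ((a : ZMod p) * b) := by
      by_contra h
      have e1 := quadraticChar_neg_one_iff_not_isSquare.mpr h1
      have e2 := quadraticChar_neg_one_iff_not_isSquare.mpr h2
      have e3 := quadraticChar_neg_one_iff_not_isSquare.mpr h
      rw [map_mul, e1, e2] at e3
      norm_num at e3
    simp [h1, h2, this]
    decide

theorem aLeg_sq {p : ℕ} (a : ℤ) : aLeg (a^2) p = 0 := by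
  unfold aLeg
  push_cast
  simp [IsSquare.sq]

theorem aLeg_one {p : ℕ} : aLeg 1 p = 0 := by simpa using aLeg_sq (p := p) 1

theorem aLeg_congr {p : ℕ} {a b : ℤ} (h : (p:ℤ) ∣ a - b) : aLeg a p = aLeg b p := by
  have : (a : ZMod p) = b := by
    rw [← sub_eq_zero, ← Int.cast_sub, ZMod.intCast_zmod_eq_zero_iff_dvd]; exact h
  unfold aLeg; rw [this]

/-- additive Hilbert symbol `(m, -n)_p`, where `e = [(n/p)/p]` -/
noncomputable def hil (p : ℕ) (e : ZMod 2) (m : ℕ) : ZMod 2 :=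
  aLeg ((m / p ^ m.factorization p : ℕ) : ℤ) p + (m.factorization p : ZMod 2) * e

theorem hil_mul {p : ℕ} [hp : Fact p.Prime] (e : ZMod 2) {a b : ℕ} (ha : a ≠ 0) (hb : b ≠ 0) :
    hil p e (a * b) = hil p e a + hil p e b := by
  unfold hil
  rw [Nat.ordCompl_mul, Nat.factorization_mul ha hb]
  push_cast
  rw [aLeg_mul]
  · simp; ring
  · have := Nat.not_dvd_ordCompl hp.out ha
    exact_mod_cast this
  · have := Nat.not_dvd_ordCompl hp.out hb
    exact_mod_cast this

theorem hil_sq {p : ℕ} [hp : Fact p.Prime] (e : ZMod 2) {a : ℕ} (ha : a ≠ 0) :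
    hil p e (a ^ 2) = 0 := by
  rw [sq, hil_mul e ha ha]; exact CharTwo.add_self_eq_zero _

theorem hil_of_not_dvd {p : ℕ} (e : ZMod 2) {a : ℕ} (h : ¬ p ∣ a) : hil p e a = aLeg a p := by
  unfold hil
  rw [Nat.factorization_eq_zero_of_not_dvd h]; simp

theorem hil_one {p : ℕ} [hp : Fact p.Prime] (e : ZMod 2) : hil p e 1 = 0 := by
  simpa using hil_sq (p := p) e one_ne_zero

theorem hil_self {p : ℕ} [hp : Fact p.Prime] (e : ZMod 2) : hil p e p = e := by
  unfold hil
  rw [hp.out.factorization_self]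
  simp [Nat.div_self hp.out.pos, aLeg_one]

theorem hil_norm_aux {p : ℕ} [hp : Fact p.Prime] (n' : ℕ) (hn' : ¬ p ∣ n') (m : ℕ) (hm : m ≠ 0) :
    ∀ (x y : ℤ), (m : ℤ) = x^2 + (p * n' : ℕ) * y^2 → hil p (aLeg n' p) m = 0 := by
  induction m using Nat.strong_induction_on with
  | _ m ih =>
  intro x y h
  have hpp : Prime (p : ℤ) := Nat.prime_iff_prime_int.mp hp.out
  have hp0 : p ≠ 0 := hp.out.ne_zero
  by_cases hx : (p : ℤ) ∣ x
  · obtain ⟨x', rfl⟩ := hx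
    by_cases hy : (p:ℤ) ∣ y
    · obtain ⟨y', rfl⟩ := hy
      have : (p:ℤ)^2 ∣ m := ⟨x'^2 + (p * n' : ℕ) * y'^2, by rw [h]; ring⟩
      have : p^2 ∣ m := by exact_mod_cast this
      obtain ⟨m', rfl⟩ := this
      have hm' : m' ≠ 0 := by rintro rfl; simp at hm
      rw [hil_mul _ (pow_ne_zero _ hp0) hm', hil_sq _ hp0, zero_add]
      refine ih m' ?_ hm' x' y' ?_
      · have : 1 < p^2 := Nat.one_lt_pow two_ne_zero hp.out.one_lt
        nlinarith [Nat.pos_of_ne_zero hm']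
      · have : (p:ℤ)^2 ≠ 0 := by positivity
        apply mul_left_cancel₀ this
        push_cast at h ⊢
        rw [h]; ring
    · have : (p:ℤ) ∣ m := ⟨p * x'^2 + n' * y^2, by rw [h]; push_cast; ring⟩
      have : p ∣ m := by exact_mod_cast this
      obtain ⟨m', rfl⟩ := this
      have hm' : m' ≠ 0 := by rintro rfl; simp at hm
      have e : (m' : ℤ) = p * x'^2 + n' * y^2 := by
        apply mul_left_cancel₀ (show (p:ℤ) ≠ 0 by exact_mod_cast hp0)
        push_cast at h ⊢
        rw [h]; ring
      have hn'' : ¬ (p:ℤ) ∣ n' := by exact_mod_cast hn'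
      have hy2 : ¬ (p:ℤ) ∣ y^2 := fun h => hy (hpp.dvd_of_dvd_pow h)
      have hnd : ¬ (p:ℤ) ∣ m' := by
        rw [e]
        intro hh
        have := (Int.dvd_add_right (Dvd.intro _ rfl)).mp hh
        rcases hpp.dvd_or_dvd this with h | h <;> tauto
      rw [hil_mul _ hp0 hm', hil_self, hil_of_not_dvd _ (by exact_mod_cast hnd)]
      rw [aLeg_congr (a := m') (b := n' * y^2) ⟨x'^2, by rw [e]; ring⟩, aLeg_mul _ _ hn'' hy2, aLeg_sq, add_zero]
      exact CharTwo.add_self_eq_zero _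
  · have hx2 : ¬ (p:ℤ) ∣ x^2 := fun h => hx (hpp.dvd_of_dvd_pow h)
    have hnd : ¬ (p:ℤ) ∣ m := by
      rw [h]
      intro hh
      exact hx2 ((Int.dvd_add_left ⟨n' * y^2, by push_cast; ring⟩).mp hh)
    rw [hil_of_not_dvd _ (by exact_mod_cast hnd)]
    rw [aLeg_congr (a := m) (b := x^2) ⟨n' * y^2, by rw [h]; push_cast; ring⟩, aLeg_sq]

theorem hil_norm {p : ℕ} [hp : Fact p.Prime] (n' : ℕ) (hn' : ¬ p ∣ n') (m s : ℕ) (hm : m ≠ 0)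
    (hs : s ≠ 0) (x y : ℤ) (h : (s:ℤ)^2 * (m : ℤ) = x^2 + (p * n' : ℕ) * y^2) :
    hil p (aLeg n' p) m = 0 := by
  have := hil_norm_aux n' hn' (s^2 * m) (by positivity) x y (by exact_mod_cast h)
  rwa [hil_mul _ (by positivity) hm, hil_sq _ hs, zero_add] at this

theorem aLeg_legendre {p : ℕ} [Fact p.Prime] (a : ℤ) (ha : ¬ (p:ℤ) ∣ a) :
    legendreSym p a = (-1) ^ (aLeg a p).val := by
  have ha' : (a : ZMod p) ≠ 0 := by rwa [Ne, ZMod.intCast_zmod_eq_zero_iff_dvd]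
  unfold aLeg
  by_cases h : IsSquare (a : ZMod p)
  · simp only [h, if_true]
    simpa using (legendreSym.eq_one_iff p ha').mpr h
  · simp only [h, if_false]
    rw [(legendreSym.eq_neg_one_iff p).mpr h]
    rfl

theorem exists_aLeg (p : ℕ) (hp : p.Prime) (hp2 : p ≠ 2) (v : ZMod 2) :
    ∃ u : ℕ, ¬ p ∣ u ∧ aLeg u p = v := by
  haveI := Fact.mk hp
  obtain rfl | rfl : v = 0 ∨ v = 1 := by revert v; decide
  · exact ⟨1, hp.one_lt.ne' ∘ Nat.dvd_one.mp, by exact_mod_cast aLeg_one⟩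
  · obtain ⟨a, ha⟩ := FiniteField.exists_nonsquare (F := ZMod p) (by rwa [ZMod.ringChar_zmod_n])
    refine ⟨a.val, ?_, ?_⟩
    · intro h
      rw [← ZMod.natCast_eq_zero_iff, ZMod.natCast_zmod_val] at h
      rw [h] at ha; exact ha IsSquare.zero
    · unfold aLeg
      simp [ha]

theorem exists_q (k : ℕ) (p : Fin k → ℕ) (hp : ∀ i, (p i).Prime)
    (hinj : Function.Injective p)
    (n : ℕ) (hn : n = ∏ i, p i) (hp4 : ∀ i, p i % 4 = 1) (v : Fin k → ZMod 2) :
    ∃ q : ℕ, q.Prime ∧ 2 * n < q ∧ (∀ i, aLeg q (p i) = v i) ∧ ∃ s : ℤ, (q:ℤ) ∣ s^2 + n := by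
  have hp2 : ∀ i, p i ≠ 2 := fun i h => by have := hp4 i; rw [h] at this; norm_num at this
  choose u hu huv using fun i => exists_aLeg (p i) (hp i) (hp2 i) (v i)
  have hco : (Set.univ : Set (Fin k)).Pairwise (Function.onFun Nat.Coprime p) := fun i _ j _ hij =>
    (Nat.coprime_primes (hp i) (hp j)).mpr (fun h => hij (hinj h))
  obtain ⟨x0, hx0⟩ := Nat.chineseRemainderOfFinset u p Finset.univ
    (fun i _ => (hp i).ne_zero) (by simpa using hco)
  have h4 : Nat.Coprime n 4 := by
    rw [hn]
    refine Nat.Coprime.prod_left (fun i _ => ?_)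
    rw [(hp i).coprime_iff_not_dvd]
    intro h
    have : p i ∣ 2 ^ 2 := by simpa using h
    exact hp2 i ((Nat.prime_dvd_prime_iff_eq (hp i) Nat.prime_two).mp ((hp i).dvd_of_dvd_pow this))
  set w : ℕ := if Even (∑ i, (v i).val) then 1 else 3 with hw
  obtain ⟨x, hx1, hx2⟩ := Nat.chineseRemainder h4 x0 w
  have hn0 : n ≠ 0 := by rw [hn]; exact Finset.prod_ne_zero_iff.mpr fun i _ => (hp i).ne_zero
  have hpn : ∀ i, p i ∣ n := fun i => by rw [hn]; exact Finset.dvd_prod_of_mem _ (Finset.mem_univ i)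
  have hxi : ∀ i, x ≡ u i [MOD p i] := fun i =>
    (hx1.of_dvd (hpn i)).trans (hx0 i (Finset.mem_univ i))
  have hcop : Nat.Coprime x (n * 4) := by
    apply Nat.Coprime.mul_right
    · rw [hn]
      refine Nat.Coprime.prod_right (fun i _ => ?_)
      rw [Nat.coprime_comm, (hp i).coprime_iff_not_dvd]
      intro h
      exact hu i (((hxi i).dvd_iff dvd_rfl).mp h)
    · have : Nat.gcd x 4 = Nat.gcd w 4 := hx2.gcd_eq
      rw [Nat.Coprime, this, hw]
      split_ifs <;> rfl
  obtain ⟨q, hq, hqp, hqx⟩ := Nat.forall_exists_prime_gt_and_modEq (2 * n) (q := n * 4) (a := x)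
    (by positivity) hcop
  haveI := Fact.mk hqp
  haveI := fun i => Fact.mk (hp i)
  have hqi : ∀ i, q ≡ u i [MOD p i] := fun i => (hqx.of_dvd ((hpn i).mul_right 4)).trans (hxi i)
  have hqv : ∀ i, aLeg q (p i) = v i := fun i => by
    rw [← huv i]
    exact aLeg_congr ((Nat.modEq_iff_dvd.mp (hqi i).symm))
  have hndi : ∀ i, ¬ p i ∣ q := fun i h => hu i (((hqi i).dvd_iff dvd_rfl).mp h)
  refine ⟨q, hqp, hq, hqv, ?_⟩
  have hq4 : q ≡ w [MOD 4] := (hqx.of_dvd (dvd_mul_left 4 n)).trans hx2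
  have hn1 : 1 ≤ n := Nat.one_le_iff_ne_zero.mpr hn0
  have hq2 : q ≠ 2 := by omega
  have e1 : legendreSym q (-1) = (-1) ^ (∑ i, (v i).val) := by
    rw [legendreSym.at_neg_one hq2]
    by_cases h : Even (∑ i, (v i).val)
    · rw [h.neg_one_pow]
      simp only [h, if_true] at hw
      exact ZMod.χ₄_nat_one_mod_four (by rw [hw] at hq4; exact hq4)
    · rw [(Nat.not_even_iff_odd.mp h).neg_one_pow]
      simp only [h, if_false] at hw
      exact ZMod.χ₄_nat_three_mod_four (by rw [hw] at hq4; exact hq4)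
  have e2 : legendreSym q n = (-1) ^ (∑ i, (v i).val) := by
    have : legendreSym q n = ∏ i, legendreSym q (p i) := by
      rw [hn]; push_cast
      exact map_prod (legendreSym.hom q) (fun i => (p i : ℤ)) Finset.univ
    rw [this, ← Finset.prod_pow_eq_pow_sum]
    refine Finset.prod_congr rfl fun i _ => ?_
    rw [legendreSym.quadratic_reciprocity_one_mod_four (hp4 i) hq2, ← hqv i]
    exact aLeg_legendre _ (by exact_mod_cast hndi i)
  have e3 : legendreSym q (-1 * n) = 1 := by
    rw [legendreSym.mul, e1, e2, ← pow_add, ← two_mul, pow_mul]; norm_num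
  have hne : ((-1 * n : ℤ) : ZMod q) ≠ 0 := by
    intro h
    rw [(legendreSym.eq_zero_iff q _).mpr h] at e3; norm_num at e3
  obtain ⟨y, hy⟩ := (legendreSym.eq_one_iff q hne).mp e3
  refine ⟨y.val, ?_⟩
  rw [← ZMod.intCast_zmod_eq_zero_iff_dvd]
  push_cast at hy ⊢
  rw [ZMod.natCast_zmod_val, sq, ← hy]; ring

/-- The facts about the ring of integers of `ℚ(√-n)` used below. -/
structure QSetup (O : Type) [CommRing O] (σ : O ≃+* O) (ω : O) (n : ℕ) : Prop where
  rank : Module.finrank ℤ O = 2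
  norm : ∀ x : O, x * σ x = ((Algebra.norm ℤ x : ℤ) : O)
  trace : ∀ x : O, ∃ t : ℤ, x + σ x = (t : O)
  int : ∀ (x : O) (g t m : ℤ), g ≠ 0 → x + σ x = ((g * t : ℤ) : O) →
    x * σ x = ((g ^ 2 * m : ℤ) : O) → (g : O) ∣ x
  sq : ω ^ 2 = -(n : O)
  sig : σ ω = -ω
  invol : ∀ x, σ (σ x) = x
  basis : ∀ x : O, ∃ (s : ℕ) (a b : ℤ), s ≠ 0 ∧ (s : O) * x = a + b * ω

set_option linter.unusedSectionVars false
section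
variable {O : Type} [CommRing O] [IsDedekindDomain O] [Module.Free ℤ O] [Module.Finite ℤ O]
  [CharZero O] {σ : O ≃+* O} {ω : O} {n : ℕ}

theorem natCast_inj_of_span {a b : ℕ} (S : QSetup O σ ω n)
    (h : Ideal.span {(a : O)} = Ideal.span {(b : O)}) : a = b := by
  have := congrArg Ideal.absNorm h
  rw [Ideal.absNorm_span_natCast, Ideal.absNorm_span_natCast, S.rank] at this
  exact Nat.pow_left_injective two_ne_zero this

theorem absNorm_of_sq (S : QSetup O σ ω n) {I : Ideal O} {m : ℕ}
    (h : I ^ 2 = Ideal.span {(m : O)}) : Ideal.absNorm I = m := by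
  have := congrArg Ideal.absNorm h
  rw [Ideal.absNorm_span_natCast, map_pow, S.rank] at this
  exact Nat.pow_left_injective two_ne_zero this

theorem ideal_sq_inj {I J : Ideal O} (h : I ^ 2 = J ^ 2) : I = J := by
  apply dvd_antisymm'
  · exact (UniqueFactorizationMonoid.pow_dvd_pow_iff_dvd two_ne_zero).mp (dvd_of_eq h.symm)
  · exact (UniqueFactorizationMonoid.pow_dvd_pow_iff_dvd two_ne_zero).mp (dvd_of_eq h)

theorem eq_of_le_of_absNorm {I J : Ideal O} (h : I ≤ J) (hn : Ideal.absNorm I = Ideal.absNorm J)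
    (h0 : Ideal.absNorm I ≠ 0) : I = J := by
  obtain ⟨M, rfl⟩ := Ideal.dvd_iff_le.mpr h
  rw [map_mul] at hn h0
  have : Ideal.absNorm M = 1 := by
    have h1 := (mul_ne_zero_iff.mp h0).1
    apply mul_left_cancel₀ h1
    rw [hn, mul_one]
  rw [Ideal.absNorm_eq_one_iff.mp this, Ideal.mul_top]

theorem absNorm_map_sigma (I : Ideal O) : Ideal.absNorm (I.map σ) = Ideal.absNorm I := by
  rw [Ideal.absNorm_apply, Ideal.absNorm_apply, Submodule.cardQuot_apply, Submodule.cardQuot_apply]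
  exact (Nat.card_congr (Ideal.quotientEquiv I (I.map σ) σ rfl).toEquiv).symm

theorem mul_sigma (S : QSetup O σ ω n) (I : Ideal O) (hI : I ≠ ⊥) :
    I * I.map σ = Ideal.span {(Ideal.absNorm I : O)} := by
  have hN0 : Ideal.absNorm I ≠ 0 := by rwa [Ne, Ideal.absNorm_eq_zero_iff]
  set g := Ideal.absNorm I with hg
  have hdv : ∀ x ∈ I, ∃ m : ℤ, x * σ x = ((g * m : ℤ) : O) := by
    intro x hx
    obtain ⟨m, hm⟩ := Ideal.absNorm_dvd_norm_of_mem hx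
    exact ⟨m, by rw [S.norm x, hm]⟩
  apply eq_of_le_of_absNorm
  · rw [Ideal.mul_le]
    intro x hx y hy'
    obtain ⟨y, hy, rfl⟩ := (Ideal.mem_map_of_equiv σ y).mp hy'
    obtain ⟨m1, h1⟩ := hdv x hx
    obtain ⟨m2, h2⟩ := hdv y hy
    obtain ⟨m3, h3⟩ := hdv (x + y) (I.add_mem hx hy)
    rw [Ideal.mem_span_singleton]
    have := S.int (x * σ y) g (m3 - m1 - m2) (m1 * m2) (by exact_mod_cast hN0) ?_ ?_
    · simpa using this
    · push_cast at h1 h2 h3 ⊢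
      rw [map_mul, S.invol]
      rw [map_add] at h3
      linear_combination h3 - h1 - h2
    · push_cast at h1 h2 h3 ⊢
      rw [map_mul, S.invol]
      calc x * σ y * (σ x * y) = (x * σ x) * (y * σ y) := by ring
        _ = _ := by rw [h1, h2]; ring
  · rw [map_mul, absNorm_map_sigma, Ideal.absNorm_span_natCast, S.rank, sq]
  · rw [map_mul, absNorm_map_sigma]; positivity

/-- norm form -/
theorem norm_form (S : QSetup O σ ω n) (x : O) :
    ∃ (s : ℕ) (a b : ℤ), s ≠ 0 ∧ (s:ℤ)^2 * Algebra.norm ℤ x = a^2 + n * b^2 := by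
  obtain ⟨s, a, b, hs, h⟩ := S.basis x
  refine ⟨s, a, b, hs, ?_⟩
  have h2 : σ ((s : O) * x) = a - b * ω := by rw [h]; simp [S.sig]; ring
  rw [map_mul, map_natCast] at h2
  have : (((s:ℤ)^2 * Algebra.norm ℤ x : ℤ) : O) = ((a^2 + n * b^2 : ℤ) : O) := by
    push_cast
    rw [← S.norm x]
    calc (s:O)^2 * (x * σ x) = (s * x) * (s * σ x) := by ring
      _ = _ := by rw [h, h2]; linear_combination (-(b:O)^2) * S.sq
  exact_mod_cast this

theorem qnorm_nonneg (S : QSetup O σ ω n) (x : O) : 0 ≤ Algebra.norm ℤ x := by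
  obtain ⟨s, a, b, hs, h⟩ := norm_form S x
  have : 0 ≤ (s:ℤ)^2 * Algebra.norm ℤ x := by rw [h]; positivity
  have hs' : (0:ℤ) < (s:ℤ)^2 := by positivity
  exact nonneg_of_mul_nonneg_right this hs'

theorem hil_absNorm_span (S : QSetup O σ ω n) {p n' : ℕ} [Fact p.Prime] (hn : n = p * n')
    (hn' : ¬ p ∣ n') (x : O) (hx : x ≠ 0) :
    hil p (aLeg n' p) (Ideal.absNorm (Ideal.span {x})) = 0 := by
  obtain ⟨s, a, b, hs, h⟩ := norm_form S x
  rw [Ideal.absNorm_span_singleton]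
  refine hil_norm n' hn' _ s ?_ hs a b ?_
  · rw [Int.natAbs_ne_zero]; exact Algebra.norm_ne_zero_iff.mpr hx
  · rw [Int.natAbs_of_nonneg (qnorm_nonneg S x), h, hn]

/-- ramified primes over `p i` -/
theorem sq_p (S : QSetup O σ ω n) {p n' : ℕ} (hn : n = p * n') (hc : Nat.Coprime p n') :
    (Ideal.span {(p : O), ω}) ^ 2 = Ideal.span {(p : O)} := by
  have hs := S.sq
  have hω : ω * ω = -((p:O) * n') := by rw [← sq, hs, hn]; push_cast; ring
  apply le_antisymm
  · rw [sq, Ideal.span_pair_mul_span_pair, Ideal.span_le]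
    intro x hx
    simp only [Set.mem_insert_iff, Set.mem_singleton_iff] at hx
    rw [SetLike.mem_coe, Ideal.mem_span_singleton]
    rcases hx with rfl | rfl | rfl | rfl
    · exact dvd_mul_right _ _
    · exact dvd_mul_right _ _
    · exact dvd_mul_left _ _
    · rw [hω]; exact (dvd_mul_right _ _).neg_right
  · rw [Ideal.span_singleton_le_iff_mem]
    have h1 : (p:O) ∈ Ideal.span {(p : O), ω} := Ideal.subset_span (by simp)
    have h2 : ω ∈ Ideal.span {(p : O), ω} := Ideal.subset_span (by simp)
    obtain ⟨u, v, huv⟩ : ∃ u v : ℤ, u * p + v * n' = 1 := Nat.isCoprime_iff_coprime.mpr hc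
    have huv' : (u:O) * p + v * n' = 1 := by exact_mod_cast congrArg (Int.cast : ℤ → O) huv
    have : (p:O) = u * (p * p) - v * (ω * ω) := by
      rw [hω]; linear_combination (-(p:O)) * huv'
    rw [sq]
    refine (congrArg (· ∈ Ideal.span {(p : O), ω} * Ideal.span {(p : O), ω}) this).mpr ?_
    exact Ideal.sub_mem _ (Ideal.mul_mem_left _ _ (Ideal.mul_mem_mul h1 h1))
      (Ideal.mul_mem_left _ _ (Ideal.mul_mem_mul h2 h2))

theorem sq_two_aux (S : QSetup O σ ω n) (hn : n % 4 = 1) :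
    (Ideal.span {(2 : O), 1 + ω}) ^ 2 = Ideal.span {((2:ℕ) : O)} := by
  have hs := S.sq
  obtain ⟨m, hm⟩ : ∃ m, n = 4 * m + 1 := ⟨n / 4, by omega⟩
  have hω : ω * ω = -(4 * (m:O) + 1) := by rw [← sq, hs, hm]; push_cast; ring
  push_cast
  apply le_antisymm
  · rw [sq, Ideal.span_pair_mul_span_pair, Ideal.span_le]
    intro x hx
    simp only [Set.mem_insert_iff, Set.mem_singleton_iff] at hx
    rw [SetLike.mem_coe, Ideal.mem_span_singleton]
    rcases hx with rfl | rfl | rfl | rfl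
    · exact dvd_mul_right _ _
    · exact dvd_mul_right _ _
    · exact dvd_mul_left _ _
    · exact ⟨ω - 2 * m, by linear_combination hω⟩
  · rw [Ideal.span_singleton_le_iff_mem]
    have h1 : (2:O) ∈ Ideal.span {(2 : O), 1 + ω} := Ideal.subset_span (by simp)
    have h2 : 1 + ω ∈ Ideal.span {(2 : O), 1 + ω} := Ideal.subset_span (by simp)
    have : (2:O) = 2 * (1 + ω) - (1 + ω) * (1 + ω) - m * (2 * 2) := by
      linear_combination hω
    rw [sq]
    refine (congrArg (· ∈ Ideal.span {(2 : O), 1 + ω} * Ideal.span {(2 : O), 1 + ω}) this).mpr ?_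
    exact Ideal.sub_mem _ (Ideal.sub_mem _ (Ideal.mul_mem_mul h1 h2) (Ideal.mul_mem_mul h2 h2))
      (Ideal.mul_mem_left _ _ (Ideal.mul_mem_mul h1 h1))

/-- uniqueness of a prime over a ramified prime -/
theorem prime_eq_of_sq (S : QSetup O σ ω n) {Q P : Ideal O} {p : ℕ} (hp : p.Prime)
    (hQ : Q ^ 2 = Ideal.span {(p : O)}) (hP : P.IsPrime) (hpP : (p : O) ∈ P) : P = Q := by
  have hQn := absNorm_of_sq S hQ
  have hle : Q ≤ P := by
    apply hP.le_of_pow_le (n := 2)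
    rwa [hQ, Ideal.span_singleton_le_iff_mem]
  have hQp : Q.IsPrime := Ideal.isPrime_of_irreducible_absNorm (by rw [hQn]; exact hp)
  have hQ0 : Q ≠ ⊥ := by
    rintro rfl
    rw [Ideal.absNorm_bot] at hQn; exact hp.ne_zero hQn.symm
  exact ((hQp.isMaximal hQ0).eq_of_le hP.ne_top hle).symm

theorem sq_two (S : QSetup O σ ω n) (hn : n % 4 = 1) {P : Ideal O} (hP : P.IsPrime)
    (h2 : (2 : O) ∈ P) : P ^ 2 = Ideal.span {((2:ℕ) : O)} := by
  rw [prime_eq_of_sq S Nat.prime_two (sq_two_aux S hn) hP (by exact_mod_cast h2)]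
  exact sq_two_aux S hn

/-- an ideal of prime norm `q` -/
theorem exists_ideal_q (S : QSetup O σ ω n) (hn0 : n ≠ 0) {q : ℕ} (hq : q.Prime) (hqn : 2 * n < q) (s : ℤ)
    (hs : (q : ℤ) ∣ s^2 + n) : ∃ I : Ideal O, I ≠ ⊥ ∧ Ideal.absNorm I = q := by
  have hqp : Prime (q:ℤ) := Nat.prime_iff_prime_int.mp hq
  have hI0 : Ideal.span {(q : O), ω - s} ≠ ⊥ := by
    intro h
    have : (q:O) ∈ Ideal.span {(q : O), ω - s} := Ideal.subset_span (by simp)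
    rw [h, Ideal.mem_bot] at this
    exact hq.ne_zero (by exact_mod_cast this)
  refine ⟨Ideal.span {(q : O), ω - s}, hI0, ?_⟩
  apply natCast_inj_of_span S
  rw [← mul_sigma S _ hI0, Ideal.map_span, Set.image_pair, map_natCast, map_sub, S.sig, map_intCast]
  obtain ⟨m, hm⟩ := hs
  have hm' : (s:O)^2 + n = q * m := by exact_mod_cast congrArg (Int.cast : ℤ → O) hm
  have hsq := S.sq
  have hc : IsCoprime (q:ℤ) (2 * s) := by
    rw [hqp.coprime_iff_not_dvd]
    intro h
    rcases hqp.dvd_or_dvd h with h | h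
    · have : q ∣ 2 := by exact_mod_cast h
      have := Nat.le_of_dvd two_pos this
      omega
    · have h2 : (q:ℤ) ∣ n := (Int.dvd_add_right (h.trans (dvd_pow_self s two_ne_zero))).mp ⟨m, hm⟩
      have : q ∣ n := by exact_mod_cast h2
      have := Nat.le_of_dvd (by omega) this
      omega
  apply le_antisymm
  · rw [Ideal.span_pair_mul_span_pair, Ideal.span_le]
    intro x hx
    simp only [Set.mem_insert_iff, Set.mem_singleton_iff] at hx
    rw [SetLike.mem_coe, Ideal.mem_span_singleton]
    rcases hx with rfl | rfl | rfl | rfl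
    · exact dvd_mul_right _ _
    · exact dvd_mul_right _ _
    · exact dvd_mul_left _ _
    · exact ⟨m, by linear_combination hm' - hsq⟩
  · rw [Ideal.span_singleton_le_iff_mem]
    obtain ⟨u, v, huv⟩ := hc
    have huv' : (u:O) * q + v * (2 * s) = 1 := by exact_mod_cast congrArg (Int.cast : ℤ → O) huv
    have h1 : (q:O) ∈ Ideal.span {(q : O), ω - s} := Ideal.subset_span (by simp)
    have h2 : ω - s ∈ Ideal.span {(q : O), ω - s} := Ideal.subset_span (by simp)
    have h3 : (q:O) ∈ Ideal.span {(q : O), -ω - s} := Ideal.subset_span (by simp)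
    have h4 : -ω - s ∈ Ideal.span {(q : O), -ω - s} := Ideal.subset_span (by simp)
    have : (q:O) = u * (q * q) - v * (q * (-ω - s) + (ω - s) * q) := by
      linear_combination (-(q:O)) * huv'
    have key : u * ((q:O) * q) - v * (q * (-ω - s) + (ω - s) * q) ∈
        Ideal.span {(q : O), ω - s} * Ideal.span {(q : O), -ω - s} :=
      Ideal.sub_mem _ (Ideal.mul_mem_left _ _ (Ideal.mul_mem_mul h1 h3))
      (Ideal.mul_mem_left _ _ (Ideal.add_mem _ (Ideal.mul_mem_mul h1 h4) (Ideal.mul_mem_mul h2 h3)))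
    rwa [← this] at key
end

set_option linter.unusedSectionVars false

section
variable {O : Type} [CommRing O] [IsDedekindDomain O] [Module.Free ℤ O] [Module.Finite ℤ O]
  [CharZero O] {σ : O ≃+* O} {ω : O} {n : ℕ}

/-- class of a nonzero ideal (junk value `1` for zero). -/
noncomputable def icl (I : Ideal O) : ClassGroup O :=
  open Classical in
  if h : I ∈ (Ideal O)⁰ then ClassGroup.mk0 ⟨I, h⟩ else 1

theorem icl_eq {I : Ideal O} (h : I ∈ (Ideal O)⁰) : icl I = ClassGroup.mk0 ⟨I, h⟩ := by
  simp [icl, h]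

theorem icl_mul {I J : Ideal O} (hI : I ≠ ⊥) (hJ : J ≠ ⊥) : icl (I * J) = icl I * icl J := by
  have h1 : I ∈ (Ideal O)⁰ := mem_nonZeroDivisors_of_ne_zero hI
  have h2 : J ∈ (Ideal O)⁰ := mem_nonZeroDivisors_of_ne_zero hJ
  rw [icl_eq h1, icl_eq h2, icl_eq (mul_mem h1 h2), ← map_mul]
  rfl

theorem icl_top : icl (⊤ : Ideal O) = 1 := by
  have h1 : (⊤ : Ideal O) ∈ (Ideal O)⁰ := mem_nonZeroDivisors_of_ne_zero (by simp)
  rw [icl_eq h1, ClassGroup.mk0_eq_one_iff]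
  exact top_isPrincipal

theorem icl_span (x : O) : icl (Ideal.span {x}) = 1 := by
  by_cases h : Ideal.span {x} ∈ (Ideal O)⁰
  · rw [icl_eq h, ClassGroup.mk0_eq_one_iff]
    exact ⟨x, rfl⟩
  · simp [icl, h]

theorem icl_pow {I : Ideal O} (hI : I ≠ ⊥) (m : ℕ) : icl (I ^ m) = icl I ^ m := by
  induction m with
  | zero => simp [Ideal.one_eq_top, icl_top]
  | succ m ih => rw [pow_succ, pow_succ, icl_mul (pow_ne_zero _ hI) hI, ih]

theorem icl_surj (c : ClassGroup O) : ∃ I : Ideal O, I ≠ ⊥ ∧ icl I = c := by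
  obtain ⟨⟨I, hI⟩, rfl⟩ := ClassGroup.mk0_surjective c
  exact ⟨I, nonZeroDivisors.ne_zero hI, icl_eq hI⟩

theorem icl_eq_iff {I J : Ideal O} (hI : I ≠ ⊥) (hJ : J ≠ ⊥) (h : icl I = icl J) :
    ∃ x y : O, x ≠ 0 ∧ y ≠ 0 ∧ Ideal.span {x} * I = Ideal.span {y} * J := by
  have h1 : I ∈ (Ideal O)⁰ := mem_nonZeroDivisors_of_ne_zero hI
  have h2 : J ∈ (Ideal O)⁰ := mem_nonZeroDivisors_of_ne_zero hJ
  rw [icl_eq h1, icl_eq h2, ClassGroup.mk0_eq_mk0_iff] at h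
  obtain ⟨x, y, hx, hy, h⟩ := h
  exact ⟨x, y, hx, hy, h⟩

theorem span_nat_sigma (m : ℕ) : (Ideal.span {(m : O)}).map σ = Ideal.span {(m : O)} := by
  rw [Ideal.map_span, Set.image_singleton, map_natCast]

theorem sigma_inj {I J : Ideal O} (h : I.map σ = J.map σ) : I = J := by
  have := congrArg (Ideal.comap σ) h
  rwa [Ideal.comap_map_of_bijective _ σ.bijective, Ideal.comap_map_of_bijective _ σ.bijective] at this

theorem sigma_sigma (S : QSetup O σ ω n) (I : Ideal O) : (I.map σ).map σ = I := by
  apply le_antisymm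
  · rw [Ideal.map_le_iff_le_comap, Ideal.map_le_iff_le_comap]
    intro x hx
    simpa [Ideal.mem_comap, S.invol] using hx
  · intro x hx
    have := Ideal.mem_map_of_mem σ (Ideal.mem_map_of_mem σ hx)
    rwa [S.invol] at this

/-- a σ-invariant prime of prime norm is ramified -/
theorem ram_of_inv (S : QSetup O σ ω n) {P : Ideal O} {q : ℕ} (hq : q.Prime)
    (hN : Ideal.absNorm P = q) (hinv : P.map σ = P) : q ∣ 4 * n := by
  have hcard : Nat.card (O ⧸ P) = q := by
    rw [← hN, Ideal.absNorm_apply, Submodule.cardQuot_apply]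
  haveI := Fact.mk hq
  have hPt : P ≠ ⊤ := by
    rintro rfl
    rw [Ideal.absNorm_top] at hN; exact hq.one_lt.ne hN
  haveI : Nontrivial (O ⧸ P) := Ideal.Quotient.nontrivial_iff.mpr hPt
  have h1 : (Ideal.Quotient.mk P ω) ∈ AddSubgroup.zmultiples (1 : O ⧸ P) :=
    mem_zmultiples_of_prime_card hcard one_ne_zero
  obtain ⟨s, hs⟩ := AddSubgroup.mem_zmultiples_iff.mp h1
  have h2 : ω - s ∈ P := by
    rw [← Ideal.Quotient.eq, ← hs]; simp
  have h3 : -ω - s ∈ P := by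
    have := Ideal.mem_map_of_mem σ h2
    rwa [hinv, map_sub, S.sig, map_intCast] at this
  have h4 : ((4 * n : ℕ) : O) ∈ P := by
    have h5 := P.mul_mem_left (-(2 * ω)) (P.sub_mem h2 h3)
    have : ((4 * n : ℕ) : O) = -(2 * ω) * (ω - s - (-ω - s)) := by
      push_cast; linear_combination 4 * S.sq
    rwa [this]
  have h6 : Ideal.span {((4 * n : ℕ) : O)} ≤ P := by rwa [Ideal.span_singleton_le_iff_mem]
  have h7 := Ideal.absNorm_dvd_absNorm_of_le h6
  rw [Ideal.absNorm_span_natCast, hN] at h7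
  exact hq.dvd_of_dvd_pow h7

theorem amb (S : QSetup O σ ω n) (H : Subgroup (ClassGroup O))
    (hH : ∀ (q : ℕ) (P : Ideal O), q.Prime → q ∣ 4 * n → P.IsPrime →
      P ^ 2 = Ideal.span {(q : O)} → icl P ∈ H) :
    ∀ (N : ℕ) (J : Ideal O), J ≠ ⊥ → Ideal.absNorm J = N → J.map σ = J → icl J ∈ H := by
  intro N
  induction N using Nat.strong_induction_on with
  | _ N ih =>
  intro J hJ hN hinv
  by_cases hT : J = ⊤
  · rw [hT, icl_top]; exact H.one_mem
  obtain ⟨P, hPm, hPJ⟩ := Ideal.exists_le_maximal J hT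
  obtain ⟨J', rfl⟩ := Ideal.dvd_iff_le.mpr hPJ
  have hP0 : P ≠ ⊥ := fun h => hJ (by rw [h, Ideal.bot_mul])
  have hJ0 : J' ≠ ⊥ := fun h => hJ (by rw [h, Ideal.mul_bot])
  have hPN : 1 < Ideal.absNorm P := by
    have h0 : Ideal.absNorm P ≠ 0 := by rwa [Ne, Ideal.absNorm_eq_zero_iff]
    have h1 : Ideal.absNorm P ≠ 1 := by rw [Ne, Ideal.absNorm_eq_one_iff]; exact hPm.ne_top
    omega
  have hJN : 0 < Ideal.absNorm J' := by
    have h0 : Ideal.absNorm J' ≠ 0 := by rwa [Ne, Ideal.absNorm_eq_zero_iff]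
    omega
  have hPp : Prime P := Ideal.prime_of_isPrime hP0 hPm.isPrime
  rw [map_mul] at hN
  by_cases hσ : P.map σ = P
  · have hinv' : J'.map σ = J' := by
      rw [Ideal.map_mul, hσ] at hinv
      exact mul_left_cancel₀ hP0 hinv
    rw [icl_mul hP0 hJ0]
    refine H.mul_mem ?_ (ih _ ?_ J' hJ0 rfl hinv')
    · have hsq := mul_sigma S P hP0
      rw [hσ, ← sq] at hsq
      obtain ⟨q, hq, m, hm, hqm⟩ : ∃ q : ℕ, q.Prime ∧ ∃ m, m ≠ 0 ∧ Ideal.absNorm P = q ^ m := by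
        obtain ⟨q, m, _, _, hq, hm⟩ := Ideal.exists_prime_and_absNorm_eq_pow P
        refine ⟨q, hq, m, ?_, hm⟩
        rintro rfl
        rw [hm] at hPN; simp at hPN
      have hqP : (q : O) ∈ P := by
        have := Ideal.absNorm_mem P
        rw [hqm] at this
        push_cast at this
        exact hPm.isPrime.mem_of_pow_mem _ this
      have hdv : Ideal.absNorm P ∣ q ^ 2 := by
        have : Ideal.span {(q : O)} ≤ P := by rwa [Ideal.span_singleton_le_iff_mem]
        have := Ideal.absNorm_dvd_absNorm_of_le this
        rwa [Ideal.absNorm_span_natCast, S.rank] at this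
      rw [hqm] at hdv
      have hm2 : m ≤ 2 := (Nat.pow_dvd_pow_iff_le_right hq.one_lt).mp hdv
      obtain rfl | rfl : m = 1 ∨ m = 2 := by omega
      · rw [pow_one] at hqm
        exact hH q P hq (ram_of_inv S hq hqm hσ) hPm.isPrime (by rw [hsq, hqm])
      · rw [hqm] at hsq
        have : P = Ideal.span {(q:O)} := by
          apply ideal_sq_inj
          rw [hsq, Ideal.span_singleton_pow]; push_cast; rfl
        rw [this, icl_span]; exact H.one_mem
    · rw [← hN]; nlinarith
  · have hσ0 : P.map σ ≠ ⊥ := by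
      intro h
      apply hP0
      rw [← sigma_sigma S P, h, Ideal.map_bot]
    have hσp : (P.map σ).IsPrime := Ideal.map_isPrime_of_equiv σ (I := P)
    have hdvd : P.map σ ∣ P * J' := by
      rw [← hinv, Ideal.map_mul]; exact dvd_mul_right _ _
    rcases (Ideal.prime_of_isPrime hσ0 hσp).dvd_or_dvd hdvd with h | h
    · exfalso
      have := (hPm.eq_of_le hσp.ne_top (Ideal.dvd_iff_le.mp h))
      exact hσ this.symm
    · obtain ⟨J'', rfl⟩ := h
      have hJ0' : J'' ≠ ⊥ := fun h => hJ0 (by rw [h, Ideal.mul_bot])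
      have e : P * (P.map σ * J'') = Ideal.span {(Ideal.absNorm P : O)} * J'' := by
        rw [← mul_assoc, mul_sigma S P hP0]
      have hs0 : Ideal.span {(Ideal.absNorm P : O)} ≠ ⊥ := by
        rw [← mul_sigma S P hP0]; exact mul_ne_zero hP0 hσ0
      rw [e] at hinv ⊢
      rw [Ideal.map_mul, span_nat_sigma] at hinv
      have hinv' := mul_left_cancel₀ hs0 hinv
      rw [icl_mul hs0 hJ0', icl_span, one_mul]
      refine ih _ ?_ J'' hJ0' rfl hinv'
      rw [← hN, map_mul]
      have h1 : 0 < Ideal.absNorm (P.map σ) := by rw [absNorm_map_sigma]; omega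
      have h2 : 0 < Ideal.absNorm J'' := by
        have h0 : Ideal.absNorm J'' ≠ 0 := by rwa [Ne, Ideal.absNorm_eq_zero_iff]
        omega
      have h3 : Ideal.absNorm J'' ≤ Ideal.absNorm (P.map σ) * Ideal.absNorm J'' :=
        Nat.le_mul_of_pos_left _ h1
      nlinarith

theorem two_torsion (S : QSetup O σ ω n) (H : Subgroup (ClassGroup O))
    (hH : ∀ (q : ℕ) (P : Ideal O), q.Prime → q ∣ 4 * n → P.IsPrime →
      P ^ 2 = Ideal.span {(q : O)} → icl P ∈ H) (c : ClassGroup O) (hc : c ^ 2 = 1) : c ∈ H := by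
  obtain ⟨I, hI, rfl⟩ := icl_surj c
  rw [← icl_pow hI, icl_eq (mem_nonZeroDivisors_of_ne_zero (pow_ne_zero 2 hI)),
    ClassGroup.mk0_eq_one_iff] at hc
  obtain ⟨γ, hγ⟩ := hc
  rw [Ideal.submodule_span_eq] at hγ
  change I ^ 2 = _ at hγ
  have hI0 : Ideal.absNorm I ≠ 0 := by rwa [Ne, Ideal.absNorm_eq_zero_iff]
  have hms := mul_sigma S I hI
  have hNγ : Algebra.norm ℤ γ = (Ideal.absNorm I : ℤ) ^ 2 := by
    have := congrArg Ideal.absNorm hγ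
    rw [map_pow, Ideal.absNorm_span_singleton] at this
    rw [← Int.natAbs_of_nonneg (qnorm_nonneg S γ), ← this]; push_cast; rfl
  have hγσ : γ * σ γ = (Ideal.absNorm I : O) ^ 2 := by
    rw [S.norm, hNγ]; push_cast; rfl
  set N := Ideal.absNorm I
  by_cases hβ : (N : O) + γ = 0
  · refine amb S H hH _ I hI rfl ?_
    have : Ideal.span {γ} = Ideal.span {(N:O)} := by
      rw [eq_neg_of_add_eq_zero_right hβ, Ideal.span_singleton_neg]
    rw [this, ← hms, sq] at hγ
    exact (mul_left_cancel₀ hI hγ).symm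
  · set β := (N : O) + γ with hβd
    have hσβ : σ β ≠ 0 := by simpa using hβ
    have hs0 : Ideal.span {σ β} ≠ ⊥ := by simpa [Ideal.span_singleton_eq_bot] using hβ
    have e1 : γ * σ β = N * β := by
      rw [hβd, map_add, map_natCast]; linear_combination hγσ
    have key : I * Ideal.span {σ β} = I.map σ * Ideal.span {β} := by
      apply mul_left_cancel₀ hI
      rw [← mul_assoc, ← sq, hγ, Ideal.span_singleton_mul_span_singleton, e1, ← mul_assoc, hms,
        Ideal.span_singleton_mul_span_singleton]
    have := amb S H hH _ (I * Ideal.span {σ β}) (mul_ne_zero hI hs0) rfl (by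
      rw [Ideal.map_mul, Ideal.map_span, Set.image_singleton, S.invol, key])
    rwa [icl_mul hI hs0, icl_span, mul_one] at this
end

set_option linter.unusedSectionVars false

section
variable {O : Type} [CommRing O] [IsDedekindDomain O] [Module.Free ℤ O] [Module.Finite ℤ O]
  [CharZero O] {σ : O ≃+* O} {ω : O} {n : ℕ}

theorem c_coprime {n d e a b c r : ℕ} (hn : n = d * e) (hn4 : n % 4 = 1) (hd4 : d % 4 = 1)
    (hr : r = 0 ∨ r = 1) (hsf : Squarefree n)
    (hprim : Nat.gcd a (Nat.gcd b c) = 1) (heq : 2 ^ r * c ^ 2 = d * a ^ 2 + e * b ^ 2) :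
    Nat.Coprime c (2 * n) ∧ (r = 1 → a % 2 = 1 ∧ b % 2 = 1) := by
  have he4 : e % 4 = 1 := by
    have : (d * e) % 4 = (d % 4) * (e % 4) % 4 := Nat.mul_mod _ _ _
    rw [← hn, hn4, hd4] at this; omega
  have hde : Nat.Coprime d e := by
    rw [hn] at hsf; exact Nat.coprime_of_squarefree_mul hsf
  have hpr : ∀ q : ℕ, q.Prime → q ∣ a → q ∣ b → q ∣ c → False := fun q hq h1 h2 h3 => by
    have := Nat.dvd_gcd h1 (Nat.dvd_gcd h2 h3)
    rw [hprim] at this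
    exact hq.one_lt.ne' (Nat.dvd_one.mp this)
  have hmod : ∀ x : ℕ, (x % 2 = 0 ∧ x ^ 2 % 4 = 0) ∨ (x % 2 = 1 ∧ x ^ 2 % 4 = 1) := by
    intro x
    have h1 : x ^ 2 % 4 = (x % 4) ^ 2 % 4 := Nat.pow_mod _ _ _
    have h2 : x % 4 = 0 ∨ x % 4 = 1 ∨ x % 4 = 2 ∨ x % 4 = 3 := by omega
    rcases h2 with h | h | h | h <;> rw [h] at h1 <;> omega
  have e1 : (d * a ^ 2 + e * b ^ 2) % 4 = (a ^ 2 % 4 + b ^ 2 % 4) % 4 := by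
    rw [Nat.add_mod, Nat.mul_mod, hd4, Nat.mul_mod e, he4]; omega
  have hpar : c % 2 = 1 ∧ (r = 1 → a % 2 = 1 ∧ b % 2 = 1) := by
    have h2 : ¬ (a % 2 = 0 ∧ b % 2 = 0 ∧ c % 2 = 0) := fun ⟨h1, h2, h3⟩ =>
      hpr 2 Nat.prime_two (Nat.dvd_of_mod_eq_zero h1) (Nat.dvd_of_mod_eq_zero h2)
        (Nat.dvd_of_mod_eq_zero h3)
    rw [← heq] at e1
    rcases hr with rfl | rfl
    · rw [pow_zero, one_mul] at e1
      rcases hmod a with ha | ha <;> rcases hmod b with hb | hb <;> rcases hmod c with hc | hc <;>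
        omega
    · rw [pow_one] at e1
      rcases hmod a with ha | ha <;> rcases hmod b with hb | hb <;> rcases hmod c with hc | hc <;>
        omega
  refine ⟨?_, hpar.2⟩
  apply Nat.Coprime.mul_right
  · rw [Nat.coprime_comm, Nat.coprime_two_left, Nat.odd_iff]; exact hpar.1
  · apply Nat.coprime_of_dvd
    intro q hq hqc hqn
    have hqs : q ∣ 2 ^ r * c ^ 2 := (hqc.trans (dvd_pow_self c two_ne_zero)).mul_left _
    have hqs2 : q ^ 2 ∣ 2 ^ r * c ^ 2 := (pow_dvd_pow_of_dvd hqc 2).mul_left _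
    rw [hn] at hqn
    have aux : ∀ d e a b : ℕ, Nat.Coprime d e → q ∣ d * a ^ 2 + e * b ^ 2 →
        q ^ 2 ∣ d * a ^ 2 + e * b ^ 2 → ¬ q ^ 2 ∣ d → q ∣ d → q ∣ a ∧ q ∣ b := by
      intro d e a b hde h1 h2 hqq hqd
      have h3 : q ∣ e * b ^ 2 := (Nat.dvd_add_right (hqd.mul_right _)).mp h1
      have h4 : q ∣ b := by
        rcases hq.dvd_mul.mp h3 with h | h
        · exact absurd (Nat.eq_one_of_dvd_coprimes hde hqd h) hq.one_lt.ne'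
        · exact hq.dvd_of_dvd_pow h
      have h5 : q ^ 2 ∣ d * a ^ 2 :=
        (Nat.dvd_add_left ((pow_dvd_pow_of_dvd h4 2).mul_left _)).mp h2
      refine ⟨?_, h4⟩
      by_contra h6
      exact hqq ((Nat.Coprime.pow 2 2 ((hq.coprime_iff_not_dvd).mpr h6)).dvd_of_dvd_mul_right h5)
    have hnq : ∀ m, m ∣ n → ¬ q ^ 2 ∣ m := by
      intro m hm hq2
      have := hsf q (by rw [← sq]; exact hq2.trans hm)
      exact hq.one_lt.ne' (Nat.isUnit_iff.mp this)
    rcases hq.dvd_mul.mp hqn with h | h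
    · obtain ⟨h1, h2⟩ := aux d e a b hde (heq ▸ hqs) (heq ▸ hqs2) (hnq d ⟨e, hn⟩) h
      exact hpr q hq h1 h2 hqc
    · obtain ⟨h1, h2⟩ := aux e d b a hde.symm (by rw [add_comm]; exact heq ▸ hqs)
        (by rw [add_comm]; exact heq ▸ hqs2) (hnq e ⟨d, by rw [hn, mul_comm]⟩) h
      exact hpr q hq h2 h1 hqc

set_option maxHeartbeats 1000000 in
theorem exists_c (S : QSetup O σ ω n) {d e a b c r : ℕ} (hn : n = d * e) (hn4 : n % 4 = 1)
    (hd4 : d % 4 = 1) (hr : r = 0 ∨ r = 1) (hsf : Squarefree n)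
    (hprim : Nat.gcd a (Nat.gcd b c) = 1) (heq : 2 ^ r * c ^ 2 = d * a ^ 2 + e * b ^ 2)
    (hc0 : 0 < c) (D : Ideal O) (hD : D ^ 2 = Ideal.span {((2 ^ r * d : ℕ) : O)}) :
    ∃ C : Ideal O, C ≠ ⊥ ∧ Ideal.absNorm C = c ∧ icl D * icl C ^ 2 = 1 := by
  obtain ⟨hcop, hodd⟩ := c_coprime hn hn4 hd4 hr hsf hprim heq
  have he4 : e % 4 = 1 := by
    have : (d * e) % 4 = (d % 4) * (e % 4) % 4 := Nat.mul_mod _ _ _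
    rw [← hn, hn4, hd4] at this; omega
  have hω := S.sq
  rw [hn] at hω
  push_cast at hω
  set α : O := d * a + b * ω with hα
  have hσα : σ α = d * a - b * ω := by rw [hα]; simp [S.sig]; ring
  have heqO : (2:O) ^ r * c ^ 2 = d * a ^ 2 + e * b ^ 2 := by exact_mod_cast congrArg (Nat.cast : ℕ → O) heq
  have hαα : α * σ α = ((2 ^ r * d : ℕ) : O) * ((c : O) ^ 2) := by
    rw [hσα, hα]; push_cast; linear_combination (-(b:O)^2) * hω - d * heqO
  have hm0 : (2 ^ r * d : ℕ) ≠ 0 := by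
    have : d ≠ 0 := by rintro rfl; norm_num at hd4
    positivity
  have hD0 : D ≠ ⊥ := by
    rintro rfl
    rw [← Ideal.zero_eq_bot, zero_pow two_ne_zero, Ideal.zero_eq_bot, eq_comm,
      Ideal.span_singleton_eq_bot] at hD
    exact hm0 (by exact_mod_cast hD)
  have hα0 : α ≠ 0 := by
    intro h
    rw [h, zero_mul] at hαα
    have : ((2 ^ r * d * c ^ 2 : ℕ) : O) = 0 := by push_cast at hαα ⊢; exact hαα.symm
    have h2 : 2 ^ r * d * c ^ 2 = 0 := by exact_mod_cast this
    have : 2 ^ r * d * c ^ 2 ≠ 0 := by positivity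
    exact this h2
  have hdvd : D ∣ Ideal.span {α} := by
    rw [← UniqueFactorizationMonoid.pow_dvd_pow_iff_dvd two_ne_zero, hD, Ideal.span_singleton_pow,
      Ideal.dvd_iff_le, Ideal.span_singleton_le_span_singleton]
    have e2 : α ^ 2 = d * (d * a ^ 2 - e * b ^ 2 + 2 * a * b * ω) := by
      rw [hα]; linear_combination (b:O)^2 * hω
    rw [e2]
    push_cast
    rw [mul_comm ((2:O)^r)]
    apply mul_dvd_mul_left
    rcases hr with rfl | rfl
    · simp
    · obtain ⟨ha, hb⟩ := hodd rfl
      have hz : (2:ℤ) ∣ d * a ^ 2 - e * b ^ 2 := by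
        have h1 : (d * a ^ 2) % 2 = 1 := by
          rw [← Nat.odd_iff]
          exact (Nat.odd_iff.mpr (by omega)).mul ((Nat.odd_iff.mpr ha).pow)
        have h2 : (e * b ^ 2) % 2 = 1 := by
          rw [← Nat.odd_iff]
          exact (Nat.odd_iff.mpr (by omega)).mul ((Nat.odd_iff.mpr hb).pow)
        have h3 : ((d * a ^ 2 : ℕ) : ℤ) % 2 = 1 := by exact_mod_cast h1
        have h4 : ((e * b ^ 2 : ℕ) : ℤ) % 2 = 1 := by exact_mod_cast h2
        push_cast at h3 h4
        omega
      obtain ⟨t, ht⟩ := hz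
      have ht' : (d:O) * a ^ 2 - e * b ^ 2 = 2 * t := by
        exact_mod_cast congrArg (Int.cast : ℤ → O) ht
      rw [ht']
      exact ⟨t + a * b * ω, by ring⟩
  obtain ⟨B, hB⟩ := hdvd
  have hσD : D.map σ = D := by
    apply ideal_sq_inj
    rw [← Ideal.map_pow, hD, span_nat_sigma]
  have hBB : B * B.map σ = Ideal.span {(c:O)} ^ 2 := by
    have h1 : Ideal.span {α} * Ideal.span {σ α} = D ^ 2 * (B * B.map σ) := by
      have : Ideal.span {σ α} = (Ideal.span {α}).map σ := by
        rw [Ideal.map_span, Set.image_singleton]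
      rw [this, hB, Ideal.map_mul, hσD]; ring
    rw [Ideal.span_singleton_mul_span_singleton, hαα, ← Ideal.span_singleton_mul_span_singleton,
      ← hD] at h1
    rw [Ideal.span_singleton_pow]
    exact (mul_left_cancel₀ (pow_ne_zero 2 hD0) h1).symm
  have hcopB : B ⊔ B.map σ = ⊤ := by
    rw [Ideal.eq_top_iff_one]
    set T := B ⊔ B.map σ with hT
    have hαB : α ∈ B := by
      have : Ideal.span {α} ≤ B := Ideal.dvd_iff_le.mp ⟨D, by rw [hB, mul_comm]⟩
      exact this (Ideal.mem_span_singleton_self α)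
    have h1 : α ∈ T := Ideal.mem_sup_left hαB
    have h2 : σ α ∈ T := Ideal.mem_sup_right (Ideal.mem_map_of_mem σ hαB)
    have h3 : ((c ^ 2 : ℕ) : O) ∈ T := by
      have : ((c ^ 2 : ℕ) : O) ∈ B * B.map σ := by
        rw [hBB, Ideal.span_singleton_pow]; push_cast; exact Ideal.mem_span_singleton_self _
      exact Ideal.mem_sup_left (Ideal.dvd_iff_le.mp (dvd_mul_right B (B.map σ)) this)
    have h4 : ((2 * d * a : ℕ) : O) ∈ T := by
      have := T.add_mem h1 h2
      rw [hσα, hα] at this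
      have e : ((2 * d * a : ℕ) : O) = d * a + b * ω + (d * a - b * ω) := by push_cast; ring
      rwa [e]
    have h5 : ((2 * n * b : ℕ) : O) ∈ T := by
      have := T.mul_mem_left (-ω) (T.sub_mem h1 h2)
      rw [hσα, hα] at this
      have e : ((2 * n * b : ℕ) : O) = -ω * (d * a + b * ω - (d * a - b * ω)) := by
        rw [hn]; push_cast; linear_combination (2 * b : O) * hω
      rwa [e]
    have hg : Nat.gcd (c ^ 2) (Nat.gcd (2 * d * a) (2 * n * b)) = 1 := by
      apply Nat.Coprime.pow_left
      apply Nat.coprime_of_dvd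
      intro q hq hqc hqg
      have hqa := hqg.trans (Nat.gcd_dvd_left _ _)
      have hqb := hqg.trans (Nat.gcd_dvd_right _ _)
      have hq2n : ¬ q ∣ 2 * n := fun h =>
        hq.one_lt.ne' (Nat.eq_one_of_dvd_coprimes hcop hqc h)
      have hq2d : ¬ q ∣ 2 * d := fun h => hq2n (by rw [hn, ← mul_assoc]; exact h.mul_right e)
      have ha := (hq.dvd_mul.mp hqa).resolve_left hq2d
      have hb := (hq.dvd_mul.mp hqb).resolve_left hq2n
      have := Nat.dvd_gcd ha (Nat.dvd_gcd hb hqc)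
      rw [hprim] at this
      exact hq.one_lt.ne' (Nat.dvd_one.mp this)
    have hgm : ∀ x y : ℕ, (x : O) ∈ T → (y : O) ∈ T → ((Nat.gcd x y : ℕ) : O) ∈ T := by
      intro x y hx hy
      have h := Nat.gcd_eq_gcd_ab x y
      have h' : ((Nat.gcd x y : ℕ) : O) = x * (Nat.gcdA x y : ℤ) + y * (Nat.gcdB x y : ℤ) := by
        exact_mod_cast congrArg (Int.cast : ℤ → O) h
      rw [h']
      exact T.add_mem (T.mul_mem_right _ hx) (T.mul_mem_right _ hy)
    have := hgm _ _ h3 (hgm _ _ h4 h5)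
    rw [hg] at this
    simpa using this
  have hB0 : B ≠ ⊥ := by
    rintro rfl
    rw [Ideal.mul_bot, Ideal.span_singleton_eq_bot] at hB
    exact hα0 hB
  obtain ⟨C, hC⟩ : ∃ C : Ideal O, B = C ^ 2 := by
    have hu : IsUnit (gcd B (B.map σ)) := by
      rw [Ideal.gcd_eq_sup, hcopB, ← Ideal.one_eq_top]; exact isUnit_one
    exact exists_eq_pow_of_mul_eq_pow hu hBB
  have hC0 : C ≠ ⊥ := by
    rintro rfl
    apply hB0
    rw [hC, ← Ideal.zero_eq_bot, zero_pow two_ne_zero]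
  refine ⟨C, hC0, ?_, ?_⟩
  · have := congrArg Ideal.absNorm hBB
    rw [map_mul, absNorm_map_sigma, hC, map_pow, map_pow, Ideal.absNorm_span_natCast, S.rank,
      ← sq] at this
    exact Nat.pow_left_injective two_ne_zero (Nat.pow_left_injective two_ne_zero this)
  · rw [← icl_pow hC0, ← hC, ← icl_mul hD0 hB0, ← hB, icl_span]
end

set_option linter.unusedSectionVars false

section
variable {O : Type} [CommRing O] [IsDedekindDomain O] [Module.Free ℤ O] [Module.Finite ℤ O]
  [CharZero O] {σ : O ≃+* O} {ω : O} {n : ℕ}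

/-- the genus map -/
noncomputable def phi (n : ℕ) {k : ℕ} (p : Fin k → ℕ) (c : ClassGroup O) : Fin k → ZMod 2 :=
  fun i => hil (p i) (aLeg ((n / p i : ℕ) : ℤ) (p i)) (Ideal.absNorm (icl_surj c).choose)

/-- basic hypotheses on the primes -/
structure PSetup (n k : ℕ) (p : Fin k → ℕ) : Prop where
  hp : ∀ i, (p i).Prime
  hinj : Function.Injective p
  hn : n = ∏ i, p i
  hp4 : ∀ i, p i % 4 = 1

namespace PSetup
variable {k : ℕ} {p : Fin k → ℕ}

theorem ne_zero (T : PSetup n k p) : n ≠ 0 := by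
  rw [T.hn]; exact Finset.prod_ne_zero_iff.mpr fun i _ => (T.hp i).ne_zero

theorem dvd (T : PSetup n k p) (i) : p i ∣ n := by rw [T.hn]; exact Finset.dvd_prod_of_mem _ (Finset.mem_univ i)

theorem sqf (T : PSetup n k p) : Squarefree n := by
  rw [T.hn]
  refine Finset.squarefree_prod_of_pairwise_isCoprime ?_ (fun i _ => (T.hp i).prime.squarefree)
  intro i _ j _ hij
  exact Nat.coprime_iff_isRelPrime.mp ((Nat.coprime_primes (T.hp i) (T.hp j)).mpr
    (fun h => hij (T.hinj h)))

theorem eq (T : PSetup n k p) (i) : n = p i * (n / p i) := (Nat.mul_div_cancel' (T.dvd i)).symm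

theorem cop (T : PSetup n k p) (i) : Nat.Coprime (p i) (n / p i) := by
  have := T.sqf
  rw [T.eq i] at this
  exact Nat.coprime_of_squarefree_mul this

theorem ndvd (T : PSetup n k p) (i) : ¬ p i ∣ n / p i := ((T.hp i).coprime_iff_not_dvd).mp (T.cop i)

theorem prod_mod (T : PSetup n k p) (s : Finset (Fin k)) : (∏ i ∈ s, p i) % 4 = 1 := by
  rw [Finset.prod_nat_mod]
  simp [T.hp4]

theorem n_mod (T : PSetup n k p) : n % 4 = 1 := by rw [T.hn]; exact T.prod_mod _

theorem prod_filter (T : PSetup n k p) {d : ℕ} (hd : d ∣ n) :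
    ∏ i ∈ Finset.univ.filter (fun i => p i ∣ d), p i = d := by
  have hsf : Squarefree d := T.sqf.squarefree_of_dvd hd
  conv_rhs => rw [← Nat.prod_primeFactors_of_squarefree hsf]
  have : d.primeFactors = (Finset.univ.filter (fun i => p i ∣ d)).image p := by
    ext q
    simp only [Nat.mem_primeFactors, Finset.mem_image, Finset.mem_filter, Finset.mem_univ, true_and]
    constructor
    · rintro ⟨hq, hqd, _⟩
      have : q ∣ ∏ i, p i := by rw [← T.hn]; exact hqd.trans hd
      obtain ⟨i, _, hi⟩ := (hq.prime.dvd_finset_prod_iff _).mp this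
      have := (Nat.prime_dvd_prime_iff_eq hq (T.hp i)).mp hi
      exact ⟨i, this ▸ hqd, this.symm⟩
    · rintro ⟨i, hi, rfl⟩
      exact ⟨T.hp i, hi, hsf.ne_zero⟩
  rw [this, Finset.prod_image (fun a _ b _ h => T.hinj h)]

theorem d_mod (T : PSetup n k p) {d : ℕ} (hd : d ∣ n) : d % 4 = 1 := by
  rw [← T.prod_filter hd]; exact T.prod_mod _

theorem exists_of_prime_dvd (T : PSetup n k p) {q : ℕ} (hq : q.Prime) (h : q ∣ 4 * n) : q = 2 ∨ ∃ i, q = p i := by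
  rcases hq.dvd_mul.mp h with h | h
  · left
    have : q ∣ 2 ^ 2 := by simpa using h
    exact (Nat.prime_dvd_prime_iff_eq hq Nat.prime_two).mp (hq.dvd_of_dvd_pow this)
  · right
    rw [T.hn] at h
    obtain ⟨i, _, hi⟩ := (hq.prime.dvd_finset_prod_iff _).mp h
    exact ⟨i, (Nat.prime_dvd_prime_iff_eq hq (T.hp i)).mp hi⟩

theorem ram_sq (T : PSetup n k p) (S : QSetup O σ ω n) {d : ℕ} (hd : d ∣ n) (r : ℕ) {P₂ : Ideal O}
    (hP : P₂ ^ 2 = Ideal.span {((2:ℕ) : O)}) :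
    ((∏ i ∈ Finset.univ.filter (fun i => p i ∣ d), Ideal.span {((p i : ℕ) : O), ω}) * P₂ ^ r) ^ 2
      = Ideal.span {((2 ^ r * d : ℕ) : O)} := by
  rw [mul_pow, ← pow_mul, mul_comm r 2, pow_mul, hP, ← Finset.prod_pow]
  rw [Finset.prod_congr rfl (fun i _ => sq_p S (T.eq i) (T.cop i))]
  rw [Ideal.prod_span_singleton, Ideal.span_singleton_pow, Ideal.span_singleton_mul_span_singleton]
  rw [← Nat.cast_prod, T.prod_filter hd]
  congr 2
  push_cast; ring

theorem phi_icl (T : PSetup n k p) (S : QSetup O σ ω n) {I : Ideal O} (hI : I ≠ ⊥) (i : Fin k) :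
    phi n p (icl I) i = hil (p i) (aLeg ((n / p i : ℕ) : ℤ) (p i)) (Ideal.absNorm I) := by
  have hs := (icl_surj (icl I)).choose_spec
  unfold phi
  set J := (icl_surj (icl I)).choose
  obtain ⟨hJ, hJI⟩ := hs
  obtain ⟨x, y, hx, hy, h⟩ := icl_eq_iff hJ hI hJI
  have := Fact.mk (T.hp i)
  have h' := congrArg (fun L => hil (p i) (aLeg ((n / p i : ℕ) : ℤ) (p i)) (Ideal.absNorm L)) h
  simp only [map_mul] at h'
  have hne : ∀ L : Ideal O, L ≠ ⊥ → Ideal.absNorm L ≠ 0 := fun L hL => by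
    rwa [Ne, Ideal.absNorm_eq_zero_iff]
  have hsp : ∀ z : O, z ≠ 0 → Ideal.span {z} ≠ ⊥ := fun z hz => by
    rwa [Ne, Ideal.span_singleton_eq_bot]
  rw [hil_mul _ (hne _ (hsp x hx)) (hne _ hJ), hil_mul _ (hne _ (hsp y hy)) (hne _ hI),
    hil_absNorm_span S (T.eq i) (T.ndvd i) x hx, hil_absNorm_span S (T.eq i) (T.ndvd i) y hy,
    zero_add, zero_add] at h'
  exact h'

theorem phi_mul (T : PSetup n k p) (S : QSetup O σ ω n) (a b : ClassGroup O) :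
    phi n p (a * b) = phi n p a + phi n p b := by
  obtain ⟨I, hI, rfl⟩ := icl_surj a
  obtain ⟨J, hJ, rfl⟩ := icl_surj b
  have hne : ∀ L : Ideal O, L ≠ ⊥ → Ideal.absNorm L ≠ 0 := fun L hL => by
    rwa [Ne, Ideal.absNorm_eq_zero_iff]
  funext i
  have := Fact.mk (T.hp i)
  rw [← icl_mul hI hJ, Pi.add_apply, T.phi_icl S hI, T.phi_icl S hJ, T.phi_icl S (mul_ne_zero hI hJ),
    map_mul, hil_mul _ (hne _ hI) (hne _ hJ)]

theorem phi_one (T : PSetup n k p) (S : QSetup O σ ω n) : phi n p (1 : ClassGroup O) = 0 := by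
  have := T.phi_mul S (1 : ClassGroup O) 1
  simpa using this

theorem phi_surj (T : PSetup n k p) (S : QSetup O σ ω n) (v : Fin k → ZMod 2) :
    ∃ c : ClassGroup O, phi n p c = v := by
  obtain ⟨q, hq, hqn, hqv, s, hs⟩ := exists_q k p T.hp T.hinj n T.hn T.hp4 v
  obtain ⟨I, hI, hIq⟩ := exists_ideal_q S T.ne_zero hq hqn s hs
  refine ⟨icl I, funext fun i => ?_⟩
  rw [T.phi_icl S hI, hIq, hil_of_not_dvd, hqv]
  intro h
  have h1 := (Nat.prime_dvd_prime_iff_eq (T.hp i) hq).mp h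
  have h2 := Nat.le_of_dvd (Nat.pos_of_ne_zero T.ne_zero) (T.dvd i)
  omega

end PSetup

/-- ramified primes -/
noncomputable def ramI {k : ℕ} (p : Fin k → ℕ) (ω : O) : Fin k ⊕ Unit → Ideal O :=
  Sum.elim (fun i => Ideal.span {((p i : ℕ) : O), ω}) (fun _ => Ideal.span {(2 : O), 1 + ω})

def ramN {k : ℕ} (p : Fin k → ℕ) : Fin k ⊕ Unit → ℕ := Sum.elim p (fun _ => 2)

noncomputable def psi {k : ℕ} (p : Fin k → ℕ) (ω : O) (Y : Fin k ⊕ Unit → ZMod 2) : ClassGroup O :=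
  ∏ j, icl (ramI p ω j) ^ (Y j).val

theorem pow_val_add {G : Type*} [Group G] {x : G} (hx : x ^ 2 = 1) (a b : ZMod 2) :
    x ^ (a + b).val = x ^ a.val * x ^ b.val := by
  have : ∀ a b : ZMod 2, (a + b).val = a.val + b.val ∨ (a + b).val + 2 = a.val + b.val := by decide
  rcases this a b with h | h
  · rw [h, pow_add]
  · rw [← pow_add, ← h, pow_add, hx, mul_one]

namespace PSetup
variable {k : ℕ} {p : Fin k → ℕ}

theorem ramI_sq (T : PSetup n k p) (S : QSetup O σ ω n) (j) : ramI p ω j ^ 2 = Ideal.span {(ramN p j : O)} := by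
  rcases j with i | _
  · exact sq_p S (T.eq i) (T.cop i)
  · exact sq_two_aux S T.n_mod

theorem ramN_prime (T : PSetup n k p) (j) : (ramN p j).Prime := by
  rcases j with i | _
  · exact T.hp i
  · exact Nat.prime_two

theorem ramI_ne (T : PSetup n k p) (S : QSetup O σ ω n) (j) : ramI p ω j ≠ ⊥ := by
  intro h
  have := absNorm_of_sq S (T.ramI_sq S j)
  rw [h, Ideal.absNorm_bot] at this
  exact (T.ramN_prime j).ne_zero this.symm

theorem icl_ram_sq (T : PSetup n k p) (S : QSetup O σ ω n) (j) : icl (ramI p ω j) ^ 2 = 1 := by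
  rw [← icl_pow (T.ramI_ne S j), T.ramI_sq S, icl_span]

theorem psi_add (T : PSetup n k p) (S : QSetup O σ ω n) (Y Z : Fin k ⊕ Unit → ZMod 2) :
    psi p ω (Y + Z) = psi p ω Y * psi p ω Z := by
  unfold psi
  rw [← Finset.prod_mul_distrib]
  exact Finset.prod_congr rfl fun j _ => pow_val_add (T.icl_ram_sq S j) _ _

/-- `psi` as a homomorphism -/
noncomputable def psiHom (T : PSetup n k p) (S : QSetup O σ ω n) :
    Multiplicative (Fin k ⊕ Unit → ZMod 2) →* ClassGroup O :=
  MonoidHom.mk' (fun Y => psi p ω Y.toAdd) (fun Y Z => T.psi_add S Y.toAdd Z.toAdd)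

/-- `phi` as a homomorphism -/
noncomputable def phiHom (T : PSetup n k p) (S : QSetup O σ ω n) :
    ClassGroup O →* Multiplicative (Fin k → ZMod 2) :=
  MonoidHom.mk' (fun c => Multiplicative.ofAdd (phi n p c)) (fun a b => by
    rw [T.phi_mul S]; rfl)

theorem psi_single (T : PSetup n k p) (S : QSetup O σ ω n) (j) : psi p ω (Pi.single j 1) = icl (ramI p ω j) := by
  unfold psi
  rw [Finset.prod_eq_single j]
  · rw [Pi.single_eq_same]; exact pow_one _
  · intro b _ hb
    rw [Pi.single_eq_of_ne hb]; exact pow_zero _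
  · simp

theorem two_tors (T : PSetup n k p) (S : QSetup O σ ω n) (c : ClassGroup O) (hc : c ^ 2 = 1) : ∃ Y, psi p ω Y = c := by
  have : c ∈ (T.psiHom S).range := by
    refine two_torsion S _ ?_ c hc
    intro q P hq hqn hP hPq
    have hqP : (q : O) ∈ P := by
      have : Ideal.span {(q : O)} ≤ P := by rw [← hPq]; exact Ideal.pow_le_self two_ne_zero
      exact this (Ideal.mem_span_singleton_self _)
    obtain ⟨j, hj⟩ : ∃ j, ramN p j = q := by
      rcases T.exists_of_prime_dvd hq hqn with rfl | ⟨i, rfl⟩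
      · exact ⟨Sum.inr (), rfl⟩
      · exact ⟨Sum.inl i, rfl⟩
    have : P = ramI p ω j := prime_eq_of_sq S hq (by rw [T.ramI_sq S, hj]) hP hqP
    rw [this]
    exact ⟨Multiplicative.ofAdd (Pi.single j 1), T.psi_single S j⟩
  obtain ⟨Y, hY⟩ := this
  exact ⟨Y.toAdd, hY⟩

theorem psi_sq (T : PSetup n k p) (S : QSetup O σ ω n) (Y : Fin k ⊕ Unit → ZMod 2) : psi p ω Y ^ 2 = 1 := by
  unfold psi
  rw [← Finset.prod_pow]
  refine Finset.prod_eq_one fun j _ => ?_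
  rw [← pow_mul, mul_comm, pow_mul, T.icl_ram_sq S, one_pow]

/-- a nontrivial relation -/
theorem psi_rel (T : PSetup n k p) (S : QSetup O σ ω n) : ∃ Y : Fin k ⊕ Unit → ZMod 2, Y ≠ 0 ∧ psi p ω Y = 1 := by
  rcases Nat.eq_zero_or_pos k with rfl | hk
  · refine ⟨Pi.single (Sum.inr ()) 1, by simp, ?_⟩
    rw [T.psi_single S]
    have hn1 : n = 1 := by rw [T.hn]; simp
    have : ramI p ω (Sum.inr ()) = Ideal.span {1 + ω} := by
      apply ideal_sq_inj
      rw [T.ramI_sq S, Ideal.span_singleton_pow]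
      have hs := S.sq
      rw [hn1] at hs
      push_cast at hs
      change Ideal.span {((2:ℕ) : O)} = _
      push_cast
      rw [Ideal.span_singleton_eq_span_singleton]
      refine ⟨⟨ω, -ω, by linear_combination -hs, by linear_combination -hs⟩, ?_⟩
      change 2 * ω = _
      linear_combination -hs
    rw [this, icl_span]
  · refine ⟨Sum.elim (fun _ => 1) (fun _ => 0), ?_, ?_⟩
    · intro h
      have := congrFun h (Sum.inl ⟨0, hk⟩)
      simp at this
    · unfold psi
      rw [Fintype.prod_sum_type]
      have e1 : ∀ s : Finset (Fin k), ∏ i ∈ s, icl (Ideal.span {((p i : ℕ) : O), ω}) =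
          icl (∏ i ∈ s, Ideal.span {((p i : ℕ) : O), ω}) := by
        intro s
        induction s using Finset.induction_on with
        | empty => simp [Ideal.one_eq_top, icl_top]
        | insert a s ha ih =>
          rw [Finset.prod_insert ha, Finset.prod_insert ha, ih, icl_mul]
          · exact T.ramI_ne S (Sum.inl a)
          · exact Finset.prod_ne_zero_iff.mpr fun i _ => T.ramI_ne S (Sum.inl i)
      have e2 : ∏ i, Ideal.span {((p i : ℕ) : O), ω} = Ideal.span {ω} := by
        apply ideal_sq_inj
        rw [← Finset.prod_pow, Finset.prod_congr rfl (fun i _ => sq_p S (T.eq i) (T.cop i)),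
          Ideal.prod_span_singleton, Ideal.span_singleton_pow, S.sq, Ideal.span_singleton_neg,
          ← Nat.cast_prod, ← T.hn]
      have e3 : (1 : ZMod 2).val = 1 := rfl
      have e4 : (0 : ZMod 2).val = 0 := rfl
      simp only [Sum.elim_inl, Sum.elim_inr, e3, e4, pow_one, pow_zero, Finset.prod_const_one,
        mul_one]
      change ∏ i, icl (Ideal.span {((p i : ℕ) : O), ω}) = 1
      rw [e1, e2, icl_span]

theorem card_tors (T : PSetup n k p) [Finite (ClassGroup O)] (S : QSetup O σ ω n) :
    Nat.card (powMonoidHom 2 : ClassGroup O →* ClassGroup O).ker ≤ 2 ^ k := by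
  have h1 : (powMonoidHom 2 : ClassGroup O →* ClassGroup O).ker ≤ (T.psiHom S).range := by
    intro c hc
    obtain ⟨Y, hY⟩ := T.two_tors S c hc
    exact ⟨Multiplicative.ofAdd Y, hY⟩
  have h2 : Nat.card (T.psiHom S).ker * Nat.card (T.psiHom S).range = 2 ^ (k + 1) := by
    have := Subgroup.card_mul_index (T.psiHom S).ker
    rw [Subgroup.index_ker] at this
    rw [this]
    change Nat.card (Fin k ⊕ Unit → ZMod 2) = _
    simp [Nat.card_eq_fintype_card]
  have h3 : 2 ≤ Nat.card (T.psiHom S).ker := by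
    obtain ⟨Y, hY, hY1⟩ := T.psi_rel S
    have : Nontrivial (T.psiHom S).ker :=
      ⟨⟨⟨Multiplicative.ofAdd Y, hY1⟩, 1, fun h => hY (congrArg (fun x => x.1.toAdd) h)⟩⟩
    have hf : Finite (T.psiHom S).ker := inferInstance
    exact Finite.one_lt_card
  have h4 : Nat.card (powMonoidHom 2 : ClassGroup O →* ClassGroup O).ker
      ≤ Nat.card (T.psiHom S).range := Subgroup.card_le_of_le h1
  have h5 : 2 * Nat.card (T.psiHom S).range ≤ 2 * 2 ^ k := by
    rw [← pow_succ', ← h2]; exact Nat.mul_le_mul_right _ h3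
  omega

theorem phiHom_apply (T : PSetup n k p) (S : QSetup O σ ω n) (c : ClassGroup O) :
    T.phiHom S c = Multiplicative.ofAdd (phi n p c) := rfl

theorem phi_two (T : PSetup n k p) (S : QSetup O σ ω n) (x : ClassGroup O) : phi n p (x ^ 2) = 0 := by
  rw [sq, T.phi_mul S]
  funext i
  exact CharTwo.add_self_eq_zero (phi n p x i)

theorem genus (T : PSetup n k p) [Finite (ClassGroup O)] (S : QSetup O σ ω n) (c : ClassGroup O)
    (hc : phi n p c = 0) : ∃ x, x ^ 2 = c := by
  have hle : (powMonoidHom 2 : ClassGroup O →* ClassGroup O).range ≤ (T.phiHom S).ker := by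
    rintro _ ⟨x, rfl⟩
    rw [MonoidHom.mem_ker, powMonoidHom_apply, phiHom_apply, T.phi_two S, ofAdd_zero]
  have h1 := Subgroup.card_mul_index (T.phiHom S).ker
  have h2 := Subgroup.card_mul_index (powMonoidHom 2 : ClassGroup O →* ClassGroup O).ker
  rw [Subgroup.index_ker] at h1 h2
  have h3 : Nat.card (T.phiHom S).range = 2 ^ k := by
    have : (T.phiHom S).range = ⊤ := by
      rw [MonoidHom.range_eq_top]
      intro v
      obtain ⟨c, hc⟩ := T.phi_surj S v.toAdd
      exact ⟨c, congrArg Multiplicative.ofAdd hc⟩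
    rw [this, Subgroup.card_top]
    change Nat.card (Fin k → ZMod 2) = _
    simp [Nat.card_eq_fintype_card]
  have h4 := T.card_tors S
  have hEq := Subgroup.eq_of_le_of_card_ge hle (by
    rw [h3] at h1
    have hk : 0 < 2 ^ k := by positivity
    apply le_of_mul_le_mul_right _ hk
    rw [h1, ← h2, mul_comm]
    exact Nat.mul_le_mul_left _ h4)
  have : c ∈ (T.phiHom S).ker := by
    rw [MonoidHom.mem_ker, phiHom_apply, hc, ofAdd_zero]
  rw [← hEq] at this
  obtain ⟨x, hx⟩ := this
  exact ⟨x, hx⟩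

theorem phi_ram (T : PSetup n k p) (S : QSetup O σ ω n) (i : Fin k) (j : Fin k ⊕ Unit) :
    phi n p (icl (ramI p ω j)) i = redeiOfN n k p i j := by
  rw [T.phi_icl S (T.ramI_ne S j), absNorm_of_sq S (T.ramI_sq S j)]
  have := Fact.mk (T.hp i)
  have hi2 : ¬ p i ∣ 2 := fun h => by
    have h1 := (Nat.prime_dvd_prime_iff_eq (T.hp i) Nat.prime_two).mp h
    have h2 := T.hp4 i
    omega
  unfold redeiOfN ramN
  rcases j with j | _
  · simp only [Matrix.of_apply, Sum.elim_inl]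
    by_cases hij : i = j
    · subst hij
      rw [if_pos rfl, hil_self]
      have e1 : (-4 * (n : ℤ)) / (p i : ℤ) = (-4) * ((n / p i : ℕ) : ℤ) := by
        have h0 : (p i : ℤ) ≠ 0 := by exact_mod_cast (T.hp i).ne_zero
        have h1 : (n : ℤ) = p i * ((n / p i : ℕ) : ℤ) := by exact_mod_cast T.eq i
        rw [h1]
        rw [show -4 * ((p i : ℤ) * ((n / p i : ℕ) : ℤ)) = p i * (-4 * ((n / p i : ℕ) : ℤ)) by ring]
        rw [Int.mul_ediv_cancel_left _ h0]
      rw [e1, aLeg_mul]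
      · have : aLeg (-4) (p i) = 0 := by
          unfold aLeg
          rw [if_pos]
          have h1 : IsSquare (-1 : ZMod (p i)) := ZMod.exists_sq_eq_neg_one_iff.mpr (by
            rw [T.hp4 i]; norm_num)
          have h2 : (((-4 : ℤ)) : ZMod (p i)) = (-1) * 2 ^ 2 := by push_cast; norm_num
          rw [h2]
          exact h1.mul (IsSquare.sq 2)
        rw [this, zero_add]
      · rw [dvd_neg]
        intro h
        have : p i ∣ 2 ^ 2 := by exact_mod_cast h
        exact hi2 ((T.hp i).dvd_of_dvd_pow this)
      · exact_mod_cast T.ndvd i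
    · rw [if_neg hij, hil_of_not_dvd]
      intro h
      exact hij (T.hinj ((Nat.prime_dvd_prime_iff_eq (T.hp i) (T.hp j)).mp h))
  · simp only [Matrix.of_apply, Sum.elim_inr]
    rw [hil_of_not_dvd _ hi2]; rfl

theorem phi_psi (T : PSetup n k p) (S : QSetup O σ ω n) (Y : Fin k ⊕ Unit → ZMod 2) :
    phi n p (psi p ω Y) = (redeiOfN n k p).mulVec Y := by
  have e : ∀ s : Finset (Fin k ⊕ Unit), ∀ i, phi n p (∏ j ∈ s, icl (ramI p ω j) ^ (Y j).val) i =
      ∑ j ∈ s, redeiOfN n k p i j * Y j := by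
    intro s i
    induction s using Finset.induction_on with
    | empty => simp [T.phi_one S]
    | insert a s ha ih =>
      rw [Finset.prod_insert ha, Finset.sum_insert ha, T.phi_mul S, Pi.add_apply, ih]
      congr 1
      rw [← T.phi_ram S]
      have : ∀ y : ZMod 2, y = 0 ∨ y = 1 := by decide
      rcases this (Y a) with h | h
      · rw [h]
        rw [show (0 : ZMod 2).val = 0 from rfl, pow_zero, T.phi_one S]; simp
      · rw [h]
        rw [show (1 : ZMod 2).val = 1 from rfl, pow_one]; simp
  funext i
  exact e Finset.univ i

theorem main (T : PSetup n k p) [Finite (ClassGroup O)] (S : QSetup O σ ω n)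
    (d₁ d₂ : ℕ) (hd₁ : d₁ ∣ n) (hd₂ : d₂ ∣ n)
    (r₁ r₂ : ℕ) (hr₁ : r₁ = 0 ∨ r₁ = 1) (hr₂ : r₂ = 0 ∨ r₂ = 1)
    (d r : ℕ) (hdn : d ∣ n) (hr : r = (r₁ + r₂) % 2)
    (hd : d * Nat.gcd d₁ d₂ ^ 2 = d₁ * d₂)
    (a₁ b₁ c₁ a₂ b₂ c₂ : ℕ) (hc₁ : 0 < c₁) (hc₂ : 0 < c₂)
    (hprim₁ : Nat.gcd a₁ (Nat.gcd b₁ c₁) = 1) (hprim₂ : Nat.gcd a₂ (Nat.gcd b₂ c₂) = 1)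
    (heq₁ : 2 ^ r₁ * c₁ ^ 2 = d₁ * a₁ ^ 2 + (n / d₁) * b₁ ^ 2)
    (heq₂ : 2 ^ r₂ * c₂ ^ 2 = d₂ * a₂ ^ 2 + (n / d₂) * b₂ ^ 2)
    (P₂ : Ideal O) (hP₂prime : P₂.IsPrime) (hP₂two : (2 : O) ∈ P₂)
    (D : Ideal O)
    (hD : D = (∏ i ∈ Finset.univ.filter (fun i => p i ∣ d),
        Ideal.span {((p i : ℕ) : O), ω}) * P₂ ^ r) :
      (∃ cls : ClassGroup O, icl D = cls ^ 4) ↔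
        ∃ Y : (Fin k ⊕ Unit) → ZMod 2,
          (redeiOfN n k p).mulVec Y =
            (fun i => aLeg (c₁ : ℤ) (p i)) + (fun i => aLeg (c₂ : ℤ) (p i)) := by
  have hP2 := sq_two S T.n_mod hP₂prime hP₂two
  have hDsq := T.ram_sq S hdn r hP2
  rw [← hD] at hDsq
  obtain ⟨D₁, hD₁⟩ : ∃ D₁ : Ideal O, D₁ ^ 2 = Ideal.span {((2 ^ r₁ * d₁ : ℕ) : O)} :=
    ⟨_, T.ram_sq S hd₁ r₁ hP2⟩
  obtain ⟨D₂, hD₂⟩ : ∃ D₂ : Ideal O, D₂ ^ 2 = Ideal.span {((2 ^ r₂ * d₂ : ℕ) : O)} :=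
    ⟨_, T.ram_sq S hd₂ r₂ hP2⟩
  have hsq0 : ∀ (J : Ideal O) (r d : ℕ), d ∣ n → J ^ 2 = Ideal.span {((2 ^ r * d : ℕ) : O)} →
      J ≠ ⊥ := by
    rintro J r d hd h rfl
    have h1 := absNorm_of_sq S h
    rw [Ideal.absNorm_bot] at h1
    have h2 : d ≠ 0 := by rintro rfl; exact T.ne_zero (Nat.eq_zero_of_zero_dvd hd)
    have : 2 ^ r * d ≠ 0 := by positivity
    exact this h1.symm
  have hne := hsq0 D r d hdn hDsq
  have hne₁ := hsq0 D₁ r₁ d₁ hd₁ hD₁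
  have hne₂ := hsq0 D₂ r₂ d₂ hd₂ hD₂
  have hmul : icl D = icl D₁ * icl D₂ := by
    obtain ⟨e, he⟩ : ∃ e, r₁ + r₂ = r + 2 * e := ⟨(r₁ + r₂) / 2, by omega⟩
    have : D₁ * D₂ = D * Ideal.span {((2 ^ e * Nat.gcd d₁ d₂ : ℕ) : O)} := by
      apply ideal_sq_inj
      rw [mul_pow, mul_pow, hD₁, hD₂, hDsq, Ideal.span_singleton_pow,
        Ideal.span_singleton_mul_span_singleton, Ideal.span_singleton_mul_span_singleton]
      congr 2
      norm_cast
      calc 2 ^ r₁ * d₁ * (2 ^ r₂ * d₂) = 2 ^ (r₁ + r₂) * (d₁ * d₂) := by ring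
        _ = _ := by rw [he, ← hd]; ring
    have hs : Ideal.span {((2 ^ e * Nat.gcd d₁ d₂ : ℕ) : O)} ≠ ⊥ := by
      intro h
      rw [h, Ideal.mul_bot] at this
      exact mul_ne_zero hne₁ hne₂ this
    rw [← icl_mul hne₁ hne₂, this, icl_mul hne hs, icl_span, mul_one]
  have en : ∀ {d}, d ∣ n → n = d * (n / d) := fun h => (Nat.mul_div_cancel' h).symm
  obtain ⟨C₁, hC₁, hN₁, hcl₁⟩ := exists_c S (en hd₁) T.n_mod (T.d_mod hd₁) hr₁ T.sqf hprim₁ heq₁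
    hc₁ D₁ hD₁
  obtain ⟨C₂, hC₂, hN₂, hcl₂⟩ := exists_c S (en hd₂) T.n_mod (T.d_mod hd₂) hr₂ T.sqf hprim₂ heq₂
    hc₂ D₂ hD₂
  have hco₁ := (c_coprime (en hd₁) T.n_mod (T.d_mod hd₁) hr₁ T.sqf hprim₁ heq₁).1
  have hco₂ := (c_coprime (en hd₂) T.n_mod (T.d_mod hd₂) hr₂ T.sqf hprim₂ heq₂).1
  have hph : ∀ (C : Ideal O) (c : ℕ), C ≠ ⊥ → Ideal.absNorm C = c → Nat.Coprime c (2 * n) →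
      phi n p (icl C) = fun i => aLeg (c : ℤ) (p i) := by
    intro C c hC hN hco
    funext i
    rw [T.phi_icl S hC, hN, hil_of_not_dvd]
    intro h
    exact (T.hp i).one_lt.ne' (Nat.eq_one_of_dvd_coprimes hco h ((T.dvd i).mul_left 2))
  have hD1 : icl D₁ ^ 2 = 1 := by rw [← icl_pow hne₁, hD₁, icl_span]
  have hD2 : icl D₂ ^ 2 = 1 := by rw [← icl_pow hne₂, hD₂, icl_span]
  set g := icl C₁ * icl C₂ with hg
  have hDg : icl D = g ^ 2 := by
    have aux : ∀ x y : ClassGroup O, x ^ 2 = 1 → x * y ^ 2 = 1 → x = y ^ 2 := by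
      intro x y h1 h2
      apply mul_left_cancel (a := x)
      rw [h2, ← sq, h1]
    rw [hmul, hg, mul_pow, ← aux _ _ hD1 hcl₁, ← aux _ _ hD2 hcl₂]
  have hphg : phi n p g = (fun i => aLeg (c₁ : ℤ) (p i)) + (fun i => aLeg (c₂ : ℤ) (p i)) := by
    rw [hg, T.phi_mul S, hph C₁ c₁ hC₁ hN₁ hco₁, hph C₂ c₂ hC₂ hN₂ hco₂]
  rw [← hphg, hDg]
  have hxx : ∀ x : ClassGroup O, phi n p (x ^ 2) = 0 := by
    exact T.phi_two S
  constructor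
  · rintro ⟨x, hx⟩
    obtain ⟨Y, hY⟩ := T.two_tors S (g * (x ^ 2)⁻¹) (by
      rw [mul_pow, hx, inv_pow, ← pow_mul, mul_inv_cancel])
    refine ⟨Y, ?_⟩
    rw [← T.phi_psi S, hY]
    have : g = (g * (x ^ 2)⁻¹) * x ^ 2 := by group
    conv_rhs => rw [this, T.phi_mul S, hxx, add_zero]
  · rintro ⟨Y, hY⟩
    rw [← T.phi_psi S] at hY
    obtain ⟨x, hx⟩ := T.genus S (g * psi p ω Y) (by
      rw [T.phi_mul S, hY]; funext i; exact CharTwo.add_self_eq_zero (phi n p g i))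
    refine ⟨x, ?_⟩
    rw [show 4 = 2 * 2 from rfl, pow_mul, hx, mul_pow g, T.psi_sq S, mul_one]

end PSetup
end

section
variable {K : Type} [Field K] [NumberField K]

theorem field_basis (hdeg : Module.finrank ℚ K = 2) {n : ℕ} (hn : n ≠ 0) {w : K}
    (hw : w ^ 2 = -(n : K)) (x : K) : ∃ a b : ℚ, x = (a : K) + (b : K) * w := by
  have hli : LinearIndependent ℚ ![(1 : K), w] := by
    rw [LinearIndependent.pair_iff]
    intro s t h
    have h1 : (s : K) + (t : K) * w = 0 := by
      simpa [Algebra.smul_def] using h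
    have h2 : (s : K) ^ 2 + (n : K) * (t : K) ^ 2 = 0 := by
      linear_combination (s - t * w : K) * h1 + (t : K) ^ 2 * hw
    have h3 : s ^ 2 + (n : ℚ) * t ^ 2 = 0 := by exact_mod_cast h2
    have hn' : (0 : ℚ) < n := by exact_mod_cast Nat.pos_of_ne_zero hn
    have hs : s ^ 2 = 0 := by nlinarith [sq_nonneg s, mul_nonneg hn'.le (sq_nonneg t)]
    have ht : (n : ℚ) * t ^ 2 = 0 := by nlinarith [sq_nonneg s, mul_nonneg hn'.le (sq_nonneg t)]
    refine ⟨by simpa using hs, ?_⟩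
    rcases mul_eq_zero.mp ht with h | h
    · exact absurd h hn'.ne'
    · simpa using h
  have htop := hli.span_eq_top_of_card_eq_finrank (by simp [hdeg])
  have hx : x ∈ Submodule.span ℚ (Set.range ![(1 : K), w]) := by rw [htop]; trivial
  have hr : Set.range ![(1 : K), w] = {1, w} := by simp [Set.pair_comm]
  rw [hr, Submodule.mem_span_pair] at hx
  obtain ⟨a, b, h⟩ := hx
  exact ⟨a, b, by rw [← h]; simp [Algebra.smul_def]⟩

theorem exists_QSetup (hdeg : Module.finrank ℚ K = 2) {n : ℕ} (hn : n ≠ 0) (ω : 𝓞 K)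
    (hω : algebraMap (𝓞 K) K ω ^ 2 = -(n : K)) : ∃ σ : 𝓞 K ≃+* 𝓞 K, QSetup (𝓞 K) σ ω n := by
  classical
  have hb := field_basis hdeg hn hω
  have : Algebra.IsQuadraticExtension ℚ K := { finrank_eq_two' := hdeg }
  have : IsGalois ℚ K := inferInstance
  have hcard : Nat.card Gal(K/ℚ) = 2 := by rw [IsGalois.card_aut_eq_finrank, hdeg]
  have hnt : Nontrivial Gal(K/ℚ) := by
    rw [← Finite.one_lt_card_iff_nontrivial, hcard]; norm_num
  obtain ⟨τ, hτ⟩ := exists_ne (1 : Gal(K/ℚ))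
  have hτω : τ (algebraMap (𝓞 K) K ω) = -(algebraMap (𝓞 K) K ω) := by
    have h1 : (τ (algebraMap (𝓞 K) K ω)) ^ 2 = (algebraMap (𝓞 K) K ω) ^ 2 := by
      rw [← map_pow, hω]; simp
    rcases sq_eq_sq_iff_eq_or_eq_neg.mp h1 with h | h
    · exfalso
      apply hτ
      ext x
      obtain ⟨a, b, rfl⟩ := hb x
      simp [h]
    · exact h
  have hττ : ∀ x, τ (τ x) = x := by
    intro x
    obtain ⟨a, b, rfl⟩ := hb x
    simp [hτω]
  have huniv : (Finset.univ : Finset Gal(K/ℚ)) = {1, τ} := by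
    symm
    apply Finset.eq_univ_of_card
    rw [Finset.card_pair hτ.symm, ← Nat.card_eq_fintype_card, hcard]
  have hnorm : ∀ x : K, x * τ x = ((Algebra.norm ℚ x : ℚ) : K) := by
    intro x
    have := Algebra.norm_eq_prod_automorphisms ℚ x
    rw [huniv, Finset.prod_pair hτ.symm] at this
    simpa using this.symm
  have htr : ∀ x : K, x + τ x = ((Algebra.trace ℚ K x : ℚ) : K) := by
    intro x
    have := trace_eq_sum_automorphisms (K := ℚ) x
    rw [huniv, Finset.sum_pair hτ.symm] at this
    simpa using this.symm
  refine ⟨RingOfIntegers.mapRingEquiv τ.toRingEquiv, ?_⟩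
  have hinj : Function.Injective (algebraMap (𝓞 K) K) := FaithfulSMul.algebraMap_injective _ _
  have hσ : ∀ x : 𝓞 K, algebraMap (𝓞 K) K (RingOfIntegers.mapRingEquiv τ.toRingEquiv x) =
      τ (algebraMap (𝓞 K) K x) :=
    fun x => rfl
  constructor
  · rw [RingOfIntegers.rank, hdeg]
  · intro x
    apply hinj
    rw [map_mul, hσ, hnorm, ← Algebra.coe_norm_int]
    simp
  · intro x
    refine ⟨Algebra.trace ℤ (𝓞 K) x, ?_⟩
    apply hinj
    rw [map_add, hσ, htr, ← Algebra.coe_trace_int]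
    simp
  · intro x g t m hg h1 h2
    have h1' := congrArg (algebraMap (𝓞 K) K) h1
    have h2' := congrArg (algebraMap (𝓞 K) K) h2
    rw [map_add, hσ] at h1'
    rw [map_mul, hσ] at h2'
    simp only [map_intCast] at h1' h2'
    push_cast at h1' h2'
    have hg' : (g : K) ≠ 0 := by exact_mod_cast hg
    have hi : IsIntegral ℤ ((algebraMap (𝓞 K) K x) / g) := by
      refine ⟨Polynomial.X ^ 2 - Polynomial.C t * Polynomial.X + Polynomial.C m, ?_, ?_⟩
      · monicity!
      · simp only [Polynomial.eval₂_add, Polynomial.eval₂_sub, Polynomial.eval₂_mul,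
          Polynomial.eval₂_pow, Polynomial.eval₂_X, Polynomial.eval₂_C]
        simp only [eq_intCast]
        field_simp
        linear_combination (algebraMap (𝓞 K) K x) * h1' - h2'
    obtain ⟨y, hy⟩ : ∃ y : 𝓞 K, algebraMap (𝓞 K) K y = (algebraMap (𝓞 K) K x) / g :=
      ⟨⟨_, hi⟩, rfl⟩
    refine ⟨y, ?_⟩
    apply hinj
    rw [map_mul, hy, map_intCast]
    field_simp
  · apply hinj
    rw [map_pow, hω]; simp
  · apply hinj
    rw [hσ, hτω, map_neg]
  · intro x
    apply hinj
    rw [hσ, hσ, hττ]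
  · intro x
    obtain ⟨a, b, h⟩ := hb (algebraMap (𝓞 K) K x)
    refine ⟨a.den * b.den, a.num * b.den, b.num * a.den, by positivity, ?_⟩
    apply hinj
    rw [map_mul, map_add, map_mul, h]
    simp only [map_intCast, map_natCast]
    have ha : (a : K) * (a.den : K) = (a.num : K) := by exact_mod_cast Rat.mul_den_eq_num a
    have hb' : (b : K) * (b.den : K) = (b.num : K) := by exact_mod_cast Rat.mul_den_eq_num b
    push_cast
    rw [← ha, ← hb']; ring

end

/-- with `2^r·d = (2^{r₁}d₁) ⊙ (2^{r₂}d₂)` and `𝔡` the product of the ramified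
primes over the prime divisors of `d` times the `r`-th power of the ramified prime over `2`,
`[𝔡] ∈ 4A` iff `C₁ + C₂` lies in the column image of the Rédei matrix `R`. -/
theorem stmt_10 (k : ℕ) (p : Fin k → ℕ) (hp : ∀ i, (p i).Prime)
    (hinj : Function.Injective p)
    (n : ℕ) (hn : n = ∏ i, p i) (hp4 : ∀ i, p i % 4 = 1)
    (K : Type) [Field K] [NumberField K] (hdeg : Module.finrank ℚ K = 2)
    (ω : 𝓞 K) (hω : (ω : K) ^ 2 = -(n : K))
    (d₁ d₂ : ℕ) (hd₁ : d₁ ∣ n) (hd₂ : d₂ ∣ n)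
    (r₁ r₂ : ℕ) (hr₁ : r₁ = 0 ∨ r₁ = 1) (hr₂ : r₂ = 0 ∨ r₂ = 1)
    (hnorm₁ : ∃ x : K, x ≠ 0 ∧ Algebra.norm ℚ x = ((2 ^ r₁ * d₁ : ℕ) : ℚ))
    (hnorm₂ : ∃ x : K, x ≠ 0 ∧ Algebra.norm ℚ x = ((2 ^ r₂ * d₂ : ℕ) : ℚ))
    (d r : ℕ) (hdn : d ∣ n) (hr : r = (r₁ + r₂) % 2)
    (hd : d * Nat.gcd d₁ d₂ ^ 2 = d₁ * d₂)
    (a₁ b₁ c₁ a₂ b₂ c₂ : ℕ)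
    (hpos₁ : 0 < a₁ ∧ 0 < b₁ ∧ 0 < c₁) (hpos₂ : 0 < a₂ ∧ 0 < b₂ ∧ 0 < c₂)
    (hprim₁ : Nat.gcd a₁ (Nat.gcd b₁ c₁) = 1) (hprim₂ : Nat.gcd a₂ (Nat.gcd b₂ c₂) = 1)
    (heq₁ : 2 ^ r₁ * c₁ ^ 2 = d₁ * a₁ ^ 2 + (n / d₁) * b₁ ^ 2)
    (heq₂ : 2 ^ r₂ * c₂ ^ 2 = d₂ * a₂ ^ 2 + (n / d₂) * b₂ ^ 2)
    (P₂ : Ideal (𝓞 K)) (hP₂prime : P₂.IsPrime) (hP₂two : (2 : 𝓞 K) ∈ P₂) (hP₂bot : P₂ ≠ ⊥)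
    (𝔡 : Ideal (𝓞 K))
    (h𝔡 : 𝔡 = (∏ i ∈ Finset.univ.filter (fun i => p i ∣ d),
        Ideal.span {((p i : ℕ) : 𝓞 K), ω}) * P₂ ^ r) :
    ∀ hmem : 𝔡 ∈ (Ideal (𝓞 K))⁰,
      ((∃ cls : ClassGroup (𝓞 K), ClassGroup.mk0 ⟨𝔡, hmem⟩ = cls ^ 4) ↔
        ∃ Y : (Fin k ⊕ Unit) → ZMod 2,
          (redeiOfN n k p).mulVec Y =
            (fun i => aLeg (c₁ : ℤ) (p i)) + (fun i => aLeg (c₂ : ℤ) (p i))) := by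
  intro hmem
  have T : PSetup n k p := ⟨hp, hinj, hn, hp4⟩
  obtain ⟨σ, S⟩ := exists_QSetup hdeg T.ne_zero ω hω
  rw [← icl_eq hmem]
  exact T.main S d₁ d₂ hd₁ hd₂ r₁ r₂ hr₁ hr₂ d r hdn hr hd a₁ b₁ c₁ a₂ b₂ c₂ hpos₁.2.2 hpos₂.2.2
    hprim₁ hprim₂ heq₁ heq₂ P₂ hP₂prime hP₂two 𝔡 h𝔡
end

section
/- For every prime p with p ≡ 1 (mod 8), there exist positive integers x and y such that p = x² − 32·y². -/
theorem aux_odd (a : ℤ) (ha : a % 2 = 1) : a ^ 2 % 8 = 1 := by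
  have h : a % 8 = 1 ∨ a % 8 = 3 ∨ a % 8 = 5 ∨ a % 8 = 7 := by omega
  rw [pow_two, Int.mul_emod]
  rcases h with h | h | h | h <;> rw [h] <;> norm_num

theorem aux_thue (p : ℕ) (hp : p.Prime) (s : ZMod p) :
    ∃ x y : ℤ, (x ≠ 0 ∨ y ≠ 0) ∧ x ^ 2 < p ∧ y ^ 2 < p ∧ (x : ZMod p) = s * y := by
  have : Fact p.Prime := ⟨hp⟩
  set n := Nat.sqrt p with hn
  have h1 : p < (n + 1) * (n + 1) := Nat.lt_succ_sqrt p
  have h2 : n * n < p := by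
    refine lt_of_le_of_ne (Nat.sqrt_le p) ?_
    intro h
    exact hp.prime.irreducible.not_isSquare ⟨n, h.symm⟩
  have hcard : (Finset.univ : Finset (ZMod p)).card <
      (Finset.range (n + 1) ×ˢ Finset.range (n + 1)).card := by
    rw [Finset.card_product, Finset.card_range, Finset.card_univ, ZMod.card]
    exact h1
  obtain ⟨u, hu, v, hv, huv, he⟩ := Finset.exists_ne_map_eq_of_card_lt_of_maps_to
    (f := fun t : ℕ × ℕ => (t.1 : ZMod p) - s * t.2) hcard (fun _ _ => Finset.mem_univ _)
  simp only [Finset.mem_product, Finset.mem_range] at hu hv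
  have key : ∀ a b : ℕ, a < n + 1 → b < n + 1 → ((a : ℤ) - b) ^ 2 < p := by
    intro a b ha hb
    have h3 : ((n : ℤ) * n) < p := by exact_mod_cast h2
    have : ((a : ℤ) - b) ^ 2 ≤ (n : ℤ) ^ 2 := by
      apply sq_le_sq'
      · omega
      · omega
    nlinarith
  refine ⟨(u.1 : ℤ) - v.1, (u.2 : ℤ) - v.2, ?_, key _ _ hu.1 hv.1, key _ _ hu.2 hv.2, ?_⟩
  · by_contra! h
    apply huv
    ext
    · omega
    · omega
  · push_cast
    linear_combination he

theorem aux_two (x y : ℤ) (h : x ^ 2 = 2 * y ^ 2) : x = 0 ∧ y = 0 := by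
  have hd : y ∣ x := (Int.pow_dvd_pow_iff two_ne_zero).1 ⟨2, by rw [h]; ring⟩
  obtain ⟨c, rfl⟩ := hd
  by_cases hy : y = 0
  · simp [hy]
  · exfalso
    have hc : c ^ 2 = 2 := by
      have : y ^ 2 ≠ 0 := pow_ne_zero _ hy
      apply mul_left_cancel₀ this
      linear_combination h
    have h1 : c < 2 := by nlinarith
    have h2 : -2 < c := by nlinarith
    interval_cases c <;> omega

theorem aux_rep (p : ℕ) (hp : p.Prime) (h8 : p % 8 = 1) :
    ∃ a b : ℤ, (p : ℤ) = a ^ 2 - 2 * b ^ 2 := by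
  have : Fact p.Prime := ⟨hp⟩
  obtain ⟨s, hs⟩ := (ZMod.exists_sq_eq_two_iff (p := p) (by omega)).mpr (Or.inl h8)
  obtain ⟨x, y, h0, hx, hy, hxy⟩ := aux_thue p hp s
  have hdvd : (p : ℤ) ∣ x ^ 2 - 2 * y ^ 2 := by
    rw [← ZMod.intCast_zmod_eq_zero_iff_dvd]
    push_cast
    rw [hxy, hs]
    ring
  obtain ⟨k, hk⟩ := hdvd
  have hp0 : (0 : ℤ) < p := by exact_mod_cast hp.pos
  have hk1 : k < 1 := by nlinarith [sq_nonneg y]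
  have hk2 : -2 < k := by nlinarith [sq_nonneg x]
  have hk3 : k ≠ 0 := by
    rintro rfl
    have := aux_two x y (by linarith)
    tauto
  have hk4 : k = -1 := by omega
  subst hk4
  exact ⟨x + 2 * y, x + y, by linear_combination hk⟩

theorem aux_four (p : ℕ) (hp : p.Prime) (h8 : p % 8 = 1) :
    ∃ a b : ℤ, (p : ℤ) = a ^ 2 - 32 * b ^ 2 := by
  obtain ⟨a, b, h⟩ := aux_rep p hp h8
  have ha : a % 2 = 1 := by
    rcases Int.emod_two_eq_zero_or_one a with h1 | h1
    · exfalso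
      obtain ⟨c, rfl⟩ := Int.dvd_of_emod_eq_zero h1
      have : (p : ℤ) = 2 * (2 * c ^ 2 - b ^ 2) := by linear_combination h
      omega
    · exact h1
  have ha8 : a ^ 2 % 8 = 1 := aux_odd _ ha
  have hb : b % 2 = 0 := by
    rcases Int.emod_two_eq_zero_or_one b with h1 | h1
    · exact h1
    · exfalso
      have := aux_odd _ h1
      omega
  by_cases h4 : b % 4 = 0
  · obtain ⟨c, rfl⟩ := Int.dvd_of_emod_eq_zero h4
    exact ⟨a, c, by linear_combination h⟩
  · obtain ⟨c, hc⟩ : (4 : ℤ) ∣ 2 * a + 3 * b := by omega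
    refine ⟨3 * a + 4 * b, c, ?_⟩
    linear_combination h + 2 * (2 * a + 3 * b + 4 * c) * (-hc)

/-- every prime `p ≡ 1 (mod 8)` is of the form `x² − 32y²` with `x, y` positive
integers. -/
theorem stmt_13 (p : ℕ) (hp : p.Prime) (h8 : p % 8 = 1) :
    ∃ x y : ℕ, 0 < x ∧ 0 < y ∧ (p : ℤ) = (x : ℤ) ^ 2 - 32 * (y : ℤ) ^ 2 := by
  obtain ⟨a, b, h⟩ := aux_four p hp h8
  have hp0 : (0 : ℤ) < p := by exact_mod_cast hp.pos
  refine ⟨a.natAbs, b.natAbs, ?_, ?_, ?_⟩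
  · rw [Int.natAbs_pos]
    rintro rfl
    nlinarith [sq_nonneg b]
  · rw [Int.natAbs_pos]
    rintro rfl
    refine (Nat.prime_iff_prime_int.1 hp).irreducible.not_isSquare ⟨a, ?_⟩
    linear_combination h
  · rw [Int.natAbs_sq, Int.natAbs_sq]
    exact h
end

section
/- Let p be a prime with p ≡ 1 (mod 8) and let x, y be positive integers with p = x² − 32·y². Let A be the ideal class group of ℚ(√−p). Then x ≡ 3 (mod 4) if and only if A[2] ∩ 4A is trivial (that is, h_8(p) = 0). -/
open NumberField

lemma quad_coords (p : ℕ) (hp : p.Prime) 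
    (K : Type) [Field K] [NumberField K] (hdeg : Module.finrank ℚ K = 2)
    (s : K) (hs : s ^ 2 = -(p : K)) :
    (∀ z : K, ∃ u v : ℚ, z = u + v * s) ∧
    (∀ u v : ℚ, Algebra.norm ℚ ((u : K) + v * s) = u ^ 2 + p * v ^ 2 ∧
      Algebra.trace ℚ K ((u : K) + v * s) = 2 * u) := by
  have hp0 : (0 : ℚ) < p := by exact_mod_cast hp.pos
  have hli : LinearIndependent ℚ ![(1 : K), s] := by
    rw [LinearIndependent.pair_iff]
    intro a b hab
    have h1 : (a : K) = - (b * s) := by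
      rw [Algebra.smul_def, Algebra.smul_def] at hab
      simp at hab
      linear_combination hab
    have h2 : ((a ^ 2 + p * b ^ 2 : ℚ) : K) = 0 := by
      push_cast
      rw [h1]
      linear_combination (b : K) ^ 2 * hs
    have h3 : a ^ 2 + p * b ^ 2 = 0 := by exact_mod_cast h2
    have h4 : a = 0 := by nlinarith [sq_nonneg a, mul_nonneg hp0.le (sq_nonneg b)]
    subst h4
    refine ⟨rfl, ?_⟩
    have : (p : ℚ) * b ^ 2 = 0 := by linarith
    rcases mul_eq_zero.1 this with h | h
    · linarith
    · exact pow_eq_zero_iff (two_ne_zero) |>.1 h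
  let B := basisOfLinearIndependentOfCardEqFinrank hli (by simp [hdeg])
  have hB0 : B 0 = 1 := by simp [B]
  have hB1 : B 1 = s := by simp [B]
  have hrep : ∀ u v : ℚ, B.repr ((u : K) + v * s) = Finsupp.single 0 u + Finsupp.single 1 v := by
    intro u v
    have : (u : K) + v * s = u • B 0 + v • B 1 := by
      rw [hB0, hB1, Algebra.smul_def, Algebra.smul_def]; simp
    rw [this]
    simp
  refine ⟨fun z => ?_, fun u v => ?_⟩
  · refine ⟨B.repr z 0, B.repr z 1, ?_⟩
    have := B.sum_repr z
    rw [Fin.sum_univ_two, hB0, hB1, Algebra.smul_def, Algebra.smul_def] at this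
    simpa using this.symm
  · have h0 : ((u : K) + v * s) * B 0 = ((u : ℚ) : K) + (v : ℚ) * s := by rw [hB0, mul_one]
    have h1 : ((u : K) + v * s) * B 1 = ((-(p * v) : ℚ) : K) + (u : ℚ) * s := by
      rw [hB1]; push_cast; linear_combination (v : K) * hs
    have hM : Algebra.leftMulMatrix B ((u : K) + v * s) = !![u, -(p * v); v, u] := by
      ext i j
      rw [Algebra.leftMulMatrix_eq_repr_mul]
      fin_cases j
      · simp only [Fin.zero_eta, h0, hrep]
        fin_cases i <;> simp
      · simp only [Fin.mk_one, h1, hrep]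
        fin_cases i <;> simp
    rw [Algebra.norm_eq_matrix_det B, Algebra.trace_eq_matrix_trace B, hM]
    constructor
    · rw [Matrix.det_fin_two_of]; ring
    · simp [Matrix.trace_fin_two]; ring

/-- rational with `p * t^2` an integer is an integer -/
lemma rat_int_of_sq (p : ℕ) (hp : p.Prime) (t : ℚ) (n : ℤ) (h : p * t ^ 2 = n) :
    ∃ m : ℤ, t = m := by
  have hd : (t.den : ℚ) ≠ 0 := by exact_mod_cast t.den_nz
  have h1 : (p : ℤ) * t.num ^ 2 = n * t.den ^ 2 := by
    have : (p : ℚ) * t.num ^ 2 = n * t.den ^ 2 := by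
      rw [← h, ← Rat.mul_den_eq_num]; ring
    exact_mod_cast this
  have hc : IsCoprime ((t.den : ℤ) ^ 2) (t.num ^ 2) := by
    apply IsCoprime.pow
    rw [Int.isCoprime_iff_nat_coprime]
    simpa using t.reduced.symm
  have h2 : (t.den : ℤ) ^ 2 ∣ p := hc.dvd_of_dvd_mul_right (Dvd.intro_left _ h1.symm)
  have h3 : t.den ^ 2 ∣ p := by exact_mod_cast h2
  have h4 : IsUnit t.den := hp.prime.squarefree t.den (by rwa [← sq])
  exact ⟨t.num, by
    have := Rat.num_div_den t
    rw [Nat.isUnit_iff.1 h4] at this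
    simpa using this.symm⟩

lemma quad_int (p : ℕ) (hp : p.Prime) (h8 : p % 8 = 1)
    (K : Type) [Field K] [NumberField K] (hdeg : Module.finrank ℚ K = 2)
    (s : K) (hs : s ^ 2 = -(p : K)) :
    ∃ w : 𝓞 K, w ^ 2 = -(p : 𝓞 K) ∧ (∀ z : 𝓞 K, ∃ a b : ℤ, z = a + b * w) ∧
      (∀ a b : ℤ, (Ideal.absNorm (Ideal.span {(a + b * w : 𝓞 K)}) : ℤ) = a ^ 2 + p * b ^ 2) := by
  obtain ⟨hz, hn⟩ := quad_coords p hp K hdeg s hs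
  have hsi : IsIntegral ℤ s := by
    apply IsIntegral.of_pow (n := 2) (by norm_num)
    rw [hs]
    exact (isIntegral_natCast (a := p)).neg
  obtain ⟨w, hw⟩ : ∃ w : 𝓞 K, algebraMap (𝓞 K) K w = s := ⟨⟨s, hsi⟩, rfl⟩
  refine ⟨w, ?_, fun z => ?_, fun a b => ?_⟩
  · apply RingOfIntegers.ext
    simp [hw, hs]
  · obtain ⟨u, v, huv⟩ := hz z
    obtain ⟨h1, h2⟩ := hn u v
    rw [← huv, ← Algebra.coe_norm_int] at h1
    rw [← huv, ← Algebra.coe_trace_int] at h2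
    set N := Algebra.norm ℤ z
    set T := Algebra.trace ℤ (𝓞 K) z
    obtain ⟨B, hB⟩ := rat_int_of_sq p hp (2 * v) (4 * N - T ^ 2) (by
      push_cast; rw [h1, h2]; ring)
    have h3 : T ^ 2 + p * B ^ 2 = 4 * N := by
      have : (T : ℚ) ^ 2 + p * B ^ 2 = 4 * N := by rw [h1, h2, ← hB]; ring
      exact_mod_cast this
    have hp4 : (p : ℤ) % 4 = 1 := by omega
    have h4 : (2 ∣ T) ∧ (2 ∣ B) := by
      have h5 : (T ^ 2 + p * B ^ 2) % 4 = 0 := by omega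
      rw [Int.add_emod, Int.mul_emod, hp4] at h5
      rcases Int.even_or_odd' T with ⟨k, hk | hk⟩ <;> rcases Int.even_or_odd' B with ⟨l, hl | hl⟩ <;> rw [hk, hl] at h5 <;> ring_nf at h5 ⊢ <;> omega
    obtain ⟨⟨a, ha⟩, ⟨b, hb⟩⟩ := h4
    refine ⟨a, b, ?_⟩
    apply RingOfIntegers.ext
    have hu : u = a := by rw [ha] at h2; push_cast at h2; linarith
    have hv : v = b := by rw [hb] at hB; push_cast at hB; linarith
    rw [huv, hu, hv]
    simp [hw]
  · rw [Ideal.absNorm_span_singleton]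
    have h1 := (hn a b).1
    have h2 : Algebra.norm ℤ (a + b * w : 𝓞 K) = a ^ 2 + p * b ^ 2 := by
      have : ((Algebra.norm ℤ (a + b * w : 𝓞 K) : ℤ) : ℚ) = a ^ 2 + p * b ^ 2 := by
        rw [Algebra.coe_norm_int, ← h1]
        simp [hw]
      exact_mod_cast this
    rw [h2, Int.natAbs_of_nonneg (by positivity)]

section ctx
variable {K : Type} [Field K] [NumberField K]

/-- the standing description of the ring of integers -/
structure QInt (p : ℕ) (w : 𝓞 K) : Prop where
  pp : p.Prime
  h8 : p % 8 = 1
  sq : w ^ 2 = -(p : 𝓞 K)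
  rep : ∀ z : 𝓞 K, ∃ a b : ℤ, z = a + b * w
  nrm : ∀ a b : ℤ, (Ideal.absNorm (Ideal.span {(a + b * w : 𝓞 K)}) : ℤ) = a ^ 2 + p * b ^ 2

variable {p : ℕ} {w : 𝓞 K}

lemma QInt.coord_zero (H : QInt p w) {a b : ℤ} (h : (a + b * w : 𝓞 K) = 0) : a = 0 ∧ b = 0 := by
  have h1 := H.nrm a b
  rw [h] at h1
  simp at h1
  have hp : (0 : ℤ) < p := by exact_mod_cast H.pp.pos
  have h4 : a = 0 := by nlinarith [sq_nonneg a, mul_nonneg hp.le (sq_nonneg b)]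
  subst h4
  refine ⟨rfl, ?_⟩
  have : (p : ℤ) * b ^ 2 = 0 := by linarith
  rcases mul_eq_zero.1 this with h | h
  · omega
  · exact pow_eq_zero_iff (two_ne_zero) |>.1 h

lemma QInt.coord_eq (H : QInt p w) {a b c d : ℤ} (h : (a + b * w : 𝓞 K) = c + d * w) :
    a = c ∧ b = d := by
  have := H.coord_zero (a := a - c) (b := b - d) (by push_cast; linear_combination h)
  omega

lemma QInt.dvd_iff (H : QInt p w) {n a b : ℤ} : (n : 𝓞 K) ∣ a + b * w ↔ n ∣ a ∧ n ∣ b := by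
  constructor
  · rintro ⟨z, hz⟩
    obtain ⟨c, d, rfl⟩ := H.rep z
    have := H.coord_eq (a := a) (b := b) (c := n * c) (d := n * d) (by push_cast; linear_combination hz)
    exact ⟨⟨c, this.1⟩, ⟨d, this.2⟩⟩
  · rintro ⟨⟨c, rfl⟩, ⟨d, rfl⟩⟩
    exact ⟨c + d * w, by push_cast; ring⟩

def P2 (w : 𝓞 K) : Ideal (𝓞 K) := Ideal.span {2, 1 + w}

lemma QInt.P2_sq (H : QInt p w) : P2 w * P2 w = Ideal.span {2} := by
  obtain ⟨k, hk⟩ : ∃ k : ℕ, p = 8 * k + 1 := ⟨p / 8, by have := H.h8; omega⟩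
  have hsq := H.sq
  rw [hk] at hsq
  push_cast at hsq
  apply le_antisymm
  · rw [P2, Ideal.span_mul_span', Ideal.span_le]
    rintro _ ⟨u, hu, v, hv, rfl⟩
    simp only [Set.mem_insert_iff, Set.mem_singleton_iff] at hu hv
    simp only [SetLike.mem_coe, Ideal.mem_span_singleton]
    rcases hu with rfl | rfl <;> rcases hv with rfl | rfl
    · exact Dvd.intro _ rfl
    · exact Dvd.intro _ rfl
    · exact Dvd.intro_left _ rfl
    · exact ⟨w - 4 * k, by linear_combination hsq⟩
  · rw [Ideal.span_singleton_le_iff_mem]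
    have h2 : (2 : 𝓞 K) ∈ P2 w := Ideal.subset_span (by simp)
    have h1 : (1 + w : 𝓞 K) ∈ P2 w := Ideal.subset_span (by simp)
    have e : (2 : 𝓞 K) = 2 * (1 + w) - (1 + w) * (1 + w) - (2 * k) * (2 * 2) := by
      linear_combination hsq
    have m1 := Ideal.mul_mem_mul h2 h1
    have m2 := Ideal.mul_mem_mul h1 h1
    have m3 := Ideal.mul_mem_left _ (2 * k : 𝓞 K) (Ideal.mul_mem_mul h2 h2)
    have m4 := Ideal.sub_mem _ (Ideal.sub_mem _ m1 m2) m3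
    rwa [← e] at m4

lemma mem_P2 {a b : ℤ} (h : 2 ∣ a - b) : (a + b * w : 𝓞 K) ∈ P2 w := by
  obtain ⟨k, hk⟩ := h
  have h2 : (2 : 𝓞 K) ∈ P2 w := Ideal.subset_span (by simp)
  have h1 : (1 + w : 𝓞 K) ∈ P2 w := Ideal.subset_span (by simp)
  have : (a + b * w : 𝓞 K) = k * 2 + b * (1 + w) := by
    have : a = 2 * k + b := by omega
    rw [this]; push_cast; ring
  rw [this]
  exact Ideal.add_mem _ (Ideal.mul_mem_left _ _ h2) (Ideal.mul_mem_left _ _ h1)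

lemma QInt.P2_ne (H : QInt p w) : P2 w ≠ ⊥ := by
  intro h
  have := H.P2_sq
  rw [h] at this
  simp at this
  have h2 := this.symm
  norm_num at h2

lemma QInt.descent (H : QInt p w) : ∀ (r : ℕ), 0 < r → ∀ J : Ideal (𝓞 K), J * J = Ideal.span {(r : 𝓞 K)} →
    ∃ g : 𝓞 K, g ≠ 0 ∧ (J = Ideal.span {g} ∨ J = Ideal.span {g} * P2 w) := by
  intro r
  induction r using Nat.strong_induction_on with
  | _ r ih =>
  intro hr J hJ
  by_cases h1 : r = 1
  · subst h1
    refine ⟨1, one_ne_zero, Or.inl ?_⟩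
    simp at hJ ⊢
    have : J * J = 1 := by rw [hJ, Ideal.one_eq_top]
    have := Ideal.isUnit_iff.1 (IsUnit.of_mul_eq_one _ this)
    exact this
  obtain ⟨q, hq, hqr⟩ := Nat.exists_prime_and_dvd h1
  obtain ⟨r', rfl⟩ := hqr
  have hr' : 0 < r' := Nat.pos_of_mul_pos_left hr
  have hmem : ∀ a b : ℤ, (a + b * w : 𝓞 K) ∈ J → (q : ℤ) ∣ a ^ 2 - p * b ^ 2 ∧ (q : ℤ) ∣ 2 * a * b := by
    intro a b hab
    have h2 := Ideal.mul_mem_mul hab hab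
    rw [hJ, Ideal.mem_span_singleton] at h2
    have h3 : ((q : ℤ) : 𝓞 K) ∣ ((a ^ 2 - p * b ^ 2 : ℤ) : 𝓞 K) + ((2 * a * b : ℤ) : 𝓞 K) * w := by
      have h4 : (q : 𝓞 K) ∣ ((q * r' : ℕ) : 𝓞 K) := by push_cast; exact Dvd.intro _ rfl
      have h5 := h4.trans h2
      convert h5 using 1
      · simp
      · push_cast; linear_combination (-(b : 𝓞 K) ^ 2) * H.sq
    exact H.dvd_iff.1 h3
  have hqi : Prime (q : ℤ) := Nat.prime_iff_prime_int.1 hq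
  have hq0 : (q : 𝓞 K) ≠ 0 := by exact_mod_cast hq.ne_zero
  have hqlt : r' < q * r' := by nlinarith [hq.two_le]
  -- general step
  have step : ∀ Q J' : Ideal (𝓞 K), Q * Q = Ideal.span {(q : 𝓞 K)} → J = Q * J' →
      J' * J' = Ideal.span {(r' : 𝓞 K)} := by
    intro Q J' hQ hJQ
    have h2 : Ideal.span {(q : 𝓞 K)} * (J' * J') = Ideal.span {(q : 𝓞 K)} * Ideal.span {(r' : 𝓞 K)} := by
      rw [Ideal.span_singleton_mul_span_singleton, ← hQ]
      push_cast at hJ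
      rw [← hJ, hJQ]; ring
    exact mul_left_cancel₀ (by simpa using hq0) h2
  by_cases hq2 : q = 2
  · subst hq2
    have hle : J ≤ P2 w := by
      intro z hz
      obtain ⟨a, b, rfl⟩ := H.rep z
      apply mem_P2
      have h3 := (hmem a b hz).1
      have hp := H.h8
      have h4 : (p : ℤ) % 2 = 1 := by omega
      have h5 : (a ^ 2 - p * b ^ 2) % 2 = 0 := by push_cast at h3; omega
      rw [Int.sub_emod, Int.mul_emod, h4] at h5
      rcases Int.even_or_odd' a with ⟨k, hk | hk⟩ <;> rcases Int.even_or_odd' b with ⟨l, hl | hl⟩ <;>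
        rw [hk, hl] at h5 <;> ring_nf at h5 <;> omega
    obtain ⟨J', hJ'⟩ := Ideal.dvd_iff_le.2 hle
    have h2 := step (P2 w) J' (by simpa using H.P2_sq) hJ'
    obtain ⟨g, hg, h | h⟩ := ih r' hqlt hr' J' h2
    · exact ⟨g, hg, Or.inr (by rw [hJ', h, mul_comm])⟩
    · refine ⟨2 * g, mul_ne_zero two_ne_zero hg, Or.inl ?_⟩
      rw [hJ', h, ← Ideal.span_singleton_mul_span_singleton, ← H.P2_sq]; ring
  by_cases hqp : q = p
  · subst hqp
    have hle : J ≤ Ideal.span {w} := by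
      intro z hz
      obtain ⟨a, b, rfl⟩ := H.rep z
      have h3 := (hmem a b hz).1
      have h4 : (q : ℤ) ∣ a := by
        apply hqi.dvd_of_dvd_pow (n := 2)
        have := dvd_add h3 (Dvd.intro (b ^ 2) rfl)
        simpa using this
      obtain ⟨c, rfl⟩ := h4
      rw [Ideal.mem_span_singleton]
      exact ⟨b - c * w, by push_cast; linear_combination (c : 𝓞 K) * H.sq⟩
    obtain ⟨J', hJ'⟩ := Ideal.dvd_iff_le.2 hle
    have hw0 : w ≠ 0 := by
      intro h; have := H.sq; rw [h] at this; simp at this; exact hq0 (by exact_mod_cast this)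
    have h2 := step (Ideal.span {w}) J' (by
      rw [Ideal.span_singleton_mul_span_singleton, ← pow_two, H.sq, Ideal.span_singleton_neg]) hJ'
    obtain ⟨g, hg, h | h⟩ := ih r' hqlt hr' J' h2
    · exact ⟨w * g, mul_ne_zero hw0 hg, Or.inl (by rw [hJ', h, Ideal.span_singleton_mul_span_singleton])⟩
    · exact ⟨w * g, mul_ne_zero hw0 hg, Or.inr (by rw [hJ', h, ← Ideal.span_singleton_mul_span_singleton]; ring)⟩
  · have hle : J ≤ Ideal.span {(q : 𝓞 K)} := by
      intro z hz
      obtain ⟨a, b, rfl⟩ := H.rep z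
      obtain ⟨h3, h4⟩ := hmem a b hz
      have hq2' : ¬ (q : ℤ) ∣ 2 := by
        intro h
        have : q ∣ 2 := by exact_mod_cast h
        exact hq2 ((Nat.prime_dvd_prime_iff_eq hq Nat.prime_two).1 this)
      have hqp' : ¬ (q : ℤ) ∣ p := by
        intro h
        have : q ∣ p := by exact_mod_cast h
        exact hqp ((Nat.prime_dvd_prime_iff_eq hq H.pp).1 this)
      have h5 : (q : ℤ) ∣ a ∧ (q : ℤ) ∣ b := by
        rcases hqi.dvd_or_dvd h4 with h | h
        · rcases hqi.dvd_or_dvd h with h | h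
          · exact absurd h hq2'
          · refine ⟨h, ?_⟩
            have h6 : (q : ℤ) ∣ p * b ^ 2 := by
              have := dvd_sub (dvd_pow h two_ne_zero) h3
              simpa using this
            rcases hqi.dvd_or_dvd h6 with h | h
            · exact absurd h hqp'
            · exact hqi.dvd_of_dvd_pow h
        · refine ⟨?_, h⟩
          apply hqi.dvd_of_dvd_pow (n := 2)
          have := dvd_add h3 (Dvd.dvd.mul_left (dvd_pow h two_ne_zero) (p : ℤ))
          simpa using this
      have := H.dvd_iff.2 h5
      rw [Ideal.mem_span_singleton]
      simpa using this
    obtain ⟨J', hJ'⟩ := Ideal.dvd_iff_le.2 hle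
    have h2 : Ideal.span {(q : 𝓞 K)} * (J' * J') = Ideal.span {(r' : 𝓞 K)} := by
      apply mul_left_cancel₀ (a := Ideal.span {(q : 𝓞 K)}) (by simpa using hq0)
      rw [Ideal.span_singleton_mul_span_singleton]
      push_cast at hJ
      rw [← hJ, hJ']; ring
    have h3 : (r' : 𝓞 K) ∈ Ideal.span {(q : 𝓞 K)} :=
      (Ideal.mul_le_left : Ideal.span {(q : 𝓞 K)} * (J' * J') ≤ Ideal.span {(q : 𝓞 K)})
        (by rw [h2]; exact Ideal.mem_span_singleton_self _)
    rw [Ideal.mem_span_singleton] at h3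
    have h4 : (q : ℤ) ∣ r' := by
      have := (H.dvd_iff (n := q) (a := r') (b := 0)).1 (by simpa using h3)
      exact this.1
    have h5 : q ∣ r' := by exact_mod_cast h4
    obtain ⟨r'', rfl⟩ := h5
    have hr'' : 0 < r'' := Nat.pos_of_mul_pos_left hr'
    have h6 : J' * J' = Ideal.span {(r'' : 𝓞 K)} := by
      apply mul_left_cancel₀ (a := Ideal.span {(q : 𝓞 K)}) (by simpa using hq0)
      rw [h2, Ideal.span_singleton_mul_span_singleton]; push_cast; rfl
    obtain ⟨g, hg, h | h⟩ := ih r'' (by nlinarith [hq.two_le]) hr'' J' h6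
    · exact ⟨q * g, mul_ne_zero hq0 hg, Or.inl (by rw [hJ', h, Ideal.span_singleton_mul_span_singleton])⟩
    · exact ⟨q * g, mul_ne_zero hq0 hg, Or.inr (by rw [hJ', h, ← Ideal.span_singleton_mul_span_singleton]; ring)⟩

/-- `2`-torsion classification on the level of ideals -/
lemma QInt.two_torsion (H : QInt p w) (I : Ideal (𝓞 K)) (hI : I ≠ ⊥) (α : 𝓞 K)
    (hα : I * I = Ideal.span {α}) :
    ∃ x y : 𝓞 K, x ≠ 0 ∧ y ≠ 0 ∧ (Ideal.span {x} * I = Ideal.span {y} * ⊤ ∨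
      Ideal.span {x} * I = Ideal.span {y} * P2 w) := by
  obtain ⟨u, v, rfl⟩ := H.rep α
  set N := Ideal.absNorm I with hN
  have hN0 : 0 < N := Nat.pos_of_ne_zero (by rw [hN, Ne, Ideal.absNorm_eq_zero_iff]; exact hI)
  have h1 : u ^ 2 + p * v ^ 2 = (N : ℤ) ^ 2 := by
    rw [← H.nrm, ← hα, map_mul]; push_cast; ring
  have hp : (0 : ℤ) < p := by exact_mod_cast H.pp.pos
  have hN0' : (0 : ℤ) < N := by exact_mod_cast hN0
  by_cases hu : u = -N
  · have hv : v = 0 := by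
      have : (p : ℤ) * v ^ 2 = 0 := by rw [hu] at h1; linarith
      rcases mul_eq_zero.1 this with h | h
      · omega
      · exact pow_eq_zero_iff (two_ne_zero) |>.1 h
    have h2 : I * I = Ideal.span {(N : 𝓞 K)} := by
      rw [hα, hu, hv, ← Ideal.span_singleton_neg]; simp
    obtain ⟨g, hg, h | h⟩ := H.descent N hN0 I h2
    · exact ⟨1, g, one_ne_zero, hg, Or.inl (by simp [h])⟩
    · exact ⟨1, g, one_ne_zero, hg, Or.inr (by simp [h])⟩
  · have hu2 : -N < u := by
      have : u ^ 2 ≤ (N : ℤ) ^ 2 := by nlinarith [mul_nonneg hp.le (sq_nonneg v)]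
      have := (abs_le_of_sq_le_sq' this hN0'.le).1
      omega
    obtain ⟨r, hr⟩ : ∃ r : ℕ, (r : ℤ) = 2 * (N + u) := ⟨(2 * (N + u)).toNat, by omega⟩
    have hr0 : 0 < r := by omega
    set β : 𝓞 K := ((N + u : ℤ) : 𝓞 K) + v * w with hβ
    have hβ0 : β ≠ 0 := by
      intro h
      have := (H.coord_zero h).1
      omega
    have h2 : β * β = (u + v * w) * (r : 𝓞 K) := by
      have e : (r : 𝓞 K) = 2 * (N + u) := by exact_mod_cast congrArg (Int.cast (R := 𝓞 K)) hr
      have e2 : (u ^ 2 + p * v ^ 2 : 𝓞 K) = N ^ 2 := by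
        exact_mod_cast congrArg (Int.cast (R := 𝓞 K)) h1
      rw [e, hβ]; push_cast
      linear_combination (v : 𝓞 K) ^ 2 * H.sq - e2
    have h3 : Ideal.span {β} * Ideal.span {β} = (I * I) * Ideal.span {(r : 𝓞 K)} := by
      rw [hα, Ideal.span_singleton_mul_span_singleton, Ideal.span_singleton_mul_span_singleton, h2]
    have h4 : I ∣ Ideal.span {β} := by
      have : I ^ 2 ∣ Ideal.span {β} ^ 2 := ⟨_, by rw [pow_two, pow_two, h3]⟩
      exact (UniqueFactorizationMonoid.pow_dvd_pow_iff_dvd two_ne_zero).1 this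
    obtain ⟨J, hJ⟩ := h4
    have h5 : J * J = Ideal.span {(r : 𝓞 K)} := by
      apply mul_left_cancel₀ (a := I * I) (mul_ne_zero hI hI)
      rw [← h3, hJ]; ring
    obtain ⟨g, hg, h | h⟩ := H.descent r hr0 J h5
    · refine ⟨g, β, hg, hβ0, Or.inl ?_⟩
      rw [hJ, h, Ideal.mul_top]; ring
    · refine ⟨2 * g, β, mul_ne_zero two_ne_zero hg, hβ0, Or.inr ?_⟩
      rw [hJ, h, ← Ideal.span_singleton_mul_span_singleton, ← H.P2_sq]; ring

lemma genus_arith {p n m : ℕ} (h8 : p % 8 = 1) (hn : n % 2 = 1) (hm : 0 < m) (a b : ℤ)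
    (h : (n : ℤ) * m ^ 2 = a ^ 2 + p * b ^ 2) : n % 4 = 1 := by
  induction m using Nat.strong_induction_on generalizing a b with
  | _ m ih =>
  obtain ⟨k, rfl⟩ : ∃ k, p = 8 * k + 1 := ⟨p / 8, by omega⟩
  rcases Nat.even_or_odd' m with ⟨l, hl | hl⟩
  · have h5 : (a ^ 2 + b ^ 2) % 4 = 0 := by
      have : a ^ 2 + b ^ 2 = 4 * (n * l ^ 2 - 2 * k * b ^ 2) := by
        rw [hl] at h; push_cast at h; linear_combination -h
      omega
    have h6 : 2 ∣ a ∧ 2 ∣ b := by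
      rcases Int.even_or_odd' a with ⟨c, hk | hk⟩ <;> rcases Int.even_or_odd' b with ⟨d, hl | hl⟩ <;>
        rw [hk, hl] at h5 <;> ring_nf at h5 <;> omega
    obtain ⟨⟨c, rfl⟩, ⟨d, rfl⟩⟩ := h6
    refine ih l (by omega) (by omega) c d ?_
    rw [hl] at h
    push_cast at h ⊢
    linarith
  · obtain ⟨j, hj⟩ := Nat.odd_iff.2 hn
    subst hl
    have h7 : (n : ℤ) % 4 = (a ^ 2 + b ^ 2) % 4 := by
      have : (n : ℤ) = a ^ 2 + b ^ 2 + 4 * (2 * k * b ^ 2 - n * (l ^ 2 + l)) := by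
        push_cast at h; linear_combination h
      omega
    rcases Int.even_or_odd' a with ⟨c, hk | hk⟩ <;> rcases Int.even_or_odd' b with ⟨d, hl | hl⟩ <;>
        rw [hk, hl] at h7 <;> ring_nf at h7 <;> omega

open nonZeroDivisors

lemma QInt.genus (H : QInt p w) (I : (Ideal (𝓞 K))⁰) (b : ClassGroup (𝓞 K))
    (hI : ClassGroup.mk0 I = b ^ 2) (hodd : Ideal.absNorm (I : Ideal (𝓞 K)) % 2 = 1) :
    Ideal.absNorm (I : Ideal (𝓞 K)) % 4 = 1 := by
  obtain ⟨C, hC⟩ := ClassGroup.mk0_surjective b⁻¹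
  have h1 : ClassGroup.mk0 (I * (C * C)) = 1 := by
    rw [map_mul, map_mul, hC, hI]; group
  have h2 := (ClassGroup.mk0_eq_one_iff (I * (C * C)).2).1 h1
  obtain ⟨z, hz⟩ := h2
  obtain ⟨c, d, rfl⟩ := H.rep z
  have h3 := H.nrm c d
  rw [← Ideal.submodule_span_eq, ← hz] at h3
  simp only [Submonoid.coe_mul, map_mul] at h3
  refine genus_arith H.h8 hodd (m := Ideal.absNorm (C : Ideal (𝓞 K))) ?_ c d ?_
  · exact Nat.pos_of_ne_zero (by
      rw [Ne, Ideal.absNorm_eq_zero_iff]; exact nonZeroDivisors.ne_zero C.2)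
  · rw [← h3]; push_cast; ring

lemma exists_q_s15 (hp : p.Prime) (h8 : p % 8 = 1) : ∃ (q : ℕ) (t : ℤ), q.Prime ∧ q % 4 = 3 ∧ q ≠ p ∧
    (q : ℤ) ∣ t ^ 2 + p := by
  have : Fact p.Prime := ⟨hp⟩
  obtain ⟨r, hr⟩ := FiniteField.exists_nonsquare (F := ZMod p) (by
    rw [ZMod.ringChar_zmod_n]; intro h; omega)
  have hco : Nat.Coprime 4 p := by
    rw [show 4 = 2 ^ 2 by norm_num]
    apply Nat.Coprime.pow_left
    rw [Nat.coprime_primes Nat.prime_two hp]; omega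
  obtain ⟨N, hN4, hNp⟩ := Nat.chineseRemainder hco 3 r.val
  have hNr : (N : ZMod p) = r := by
    have := (ZMod.natCast_eq_natCast_iff _ _ _).2 hNp
    rw [this]; simp
  have hr0 : r ≠ 0 := by rintro rfl; exact hr (by simp)
  have hN4' : N % 4 = 3 := hN4
  have hNc : Nat.Coprime N (4 * p) := by
    apply Nat.Coprime.mul_right
    · rw [show 4 = 2 ^ 2 by norm_num]
      apply Nat.Coprime.pow_right
      rw [Nat.coprime_two_right]
      exact Nat.odd_iff.2 (by omega)
    · rw [Nat.coprime_comm, hp.coprime_iff_not_dvd, ← ZMod.natCast_eq_zero_iff, hNr]; exact hr0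
  have : NeZero (4 * p) := ⟨by have := hp.pos; omega⟩
  obtain ⟨q, -, hq, hqN⟩ := Nat.forall_exists_prime_gt_and_eq_mod
    ((ZMod.isUnit_iff_coprime N (4 * p)).2 hNc) 0
  have hqm := (ZMod.natCast_eq_natCast_iff _ _ _).1 hqN
  have hq4 : q % 4 = 3 := by
    have : q % 4 = N % 4 := hqm.of_mul_right p
    omega
  have hqp : (q : ZMod p) = r := by
    rw [← hNr, ZMod.natCast_eq_natCast_iff]; exact hqm.of_mul_left 4
  have : Fact q.Prime := ⟨hq⟩
  have h1 : ¬ IsSquare (p : ZMod q) := by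
    rw [← ZMod.exists_sq_eq_prime_iff_of_mod_four_eq_one (p := p) (by omega) (by omega), hqp]
    exact hr
  have h2 : legendreSym q p = -1 := by rw [legendreSym.eq_neg_one_iff]; exact_mod_cast h1
  have h3 : legendreSym q (-1) = -1 := by
    rw [legendreSym.eq_neg_one_iff]
    push_cast
    rw [ZMod.exists_sq_eq_neg_one_iff]
    omega
  have h4 : legendreSym q (-p) = 1 := by
    rw [← neg_one_mul, legendreSym.mul, h2, h3]; norm_num
  have hqne : q ≠ p := by omega
  have h5 : ((-p : ℤ) : ZMod q) ≠ 0 := by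
    push_cast
    rw [neg_ne_zero, Ne, ZMod.natCast_eq_zero_iff, Nat.prime_dvd_prime_iff_eq hq hp]
    exact hqne
  rw [legendreSym.eq_one_iff q h5] at h4
  obtain ⟨t, ht⟩ := h4
  refine ⟨q, t.val, hq, hq4, hqne, ?_⟩
  rw [← ZMod.intCast_zmod_eq_zero_iff_dvd]
  push_cast
  push_cast at ht
  rw [ZMod.natCast_zmod_val]
  linear_combination -ht

lemma QInt.nrm_nat (H : QInt p w) (n : ℕ) : Ideal.absNorm (Ideal.span {(n : 𝓞 K)}) = n ^ 2 := by
  have h := H.nrm n 0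
  have e : (((n : ℤ) : 𝓞 K) + ((0 : ℤ) : 𝓞 K) * w) = n := by push_cast; ring
  rw [e] at h
  have h2 : (Ideal.absNorm (Ideal.span {(n : 𝓞 K)}) : ℤ) = n ^ 2 := by rw [h]; ring
  exact_mod_cast h2

lemma QInt.nrm_P2 (H : QInt p w) : Ideal.absNorm (P2 w) = 2 := by
  have h3 := congrArg Ideal.absNorm H.P2_sq
  have h4 := H.nrm_nat 2
  push_cast at h4
  rw [map_mul, h4] at h3
  nlinarith

lemma QInt.exists_I (H : QInt p w) : ∃ I : Ideal (𝓞 K), Ideal.absNorm I % 4 = 3 := by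
  obtain ⟨q, t, hq, hq4, hqp, k, hk⟩ := exists_q_s15 H.pp H.h8
  have hq0 : (q : 𝓞 K) ≠ 0 := by exact_mod_cast hq.ne_zero
  have hk' : (t ^ 2 + p : 𝓞 K) = q * k := by
    exact_mod_cast congrArg (Int.cast (R := 𝓞 K)) hk
  have hqi : Prime (q : ℤ) := Nat.prime_iff_prime_int.1 hq
  have hcop : IsCoprime (q : ℤ) (2 * t) := by
    rw [hqi.irreducible.coprime_iff_not_dvd]
    intro h
    rcases hqi.dvd_or_dvd h with h | h
    · have : q ∣ 2 := by exact_mod_cast h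
      have := (Nat.prime_dvd_prime_iff_eq hq Nat.prime_two).1 this
      omega
    · have h2 : (q : ℤ) ∣ p := by
        have := dvd_sub (Dvd.intro k hk.symm) (dvd_pow h two_ne_zero)
        simpa using this
      have : q ∣ p := by exact_mod_cast h2
      exact hqp ((Nat.prime_dvd_prime_iff_eq hq H.pp).1 this)
  obtain ⟨e, f, hef⟩ := hcop
  have hef' : (e * q + f * (2 * t) : 𝓞 K) = 1 := by
    exact_mod_cast congrArg (Int.cast (R := 𝓞 K)) hef
  -- the two conjugate ideals
  have hne : ∀ ε : ℤ, ε * ε = 1 → Ideal.absNorm (Ideal.span {(q : 𝓞 K), t + ε * w}) ≠ 1 := by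
    intro ε hε h
    rw [Ideal.absNorm_eq_one_iff, Ideal.eq_top_iff_one, Ideal.mem_span_pair] at h
    obtain ⟨A, B, hAB⟩ := h
    have hε' : (ε * ε : 𝓞 K) = 1 := by exact_mod_cast congrArg (Int.cast (R := 𝓞 K)) hε
    have h1 : ((q : ℤ) : 𝓞 K) ∣ (t : 𝓞 K) + ((-ε : ℤ) : 𝓞 K) * w := by
      refine ⟨A * (t - ε * w) + B * k, ?_⟩
      push_cast
      linear_combination (-(t - ε * w)) * hAB + B * hk' - B * ε ^ 2 * H.sq + B * p * hε'
    have h2 := (H.dvd_iff.1 h1).2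
    have h3 : (q : ℤ) ∣ 1 := by rw [← hε]; exact Dvd.dvd.mul_left ((dvd_neg).1 h2) _
    exact hqi.not_dvd_one h3
  have hmul : Ideal.span {(q : 𝓞 K), t + (1 : ℤ) * w} * Ideal.span {(q : 𝓞 K), t + (-1 : ℤ) * w} =
      Ideal.span {(q : 𝓞 K)} := by
    apply le_antisymm
    · rw [Ideal.span_mul_span', Ideal.span_le]
      rintro _ ⟨u, hu, v, hv, rfl⟩
      simp only [Set.mem_insert_iff, Set.mem_singleton_iff] at hu hv
      simp only [SetLike.mem_coe, Ideal.mem_span_singleton]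
      rcases hu with rfl | rfl <;> rcases hv with rfl | rfl
      · exact Dvd.intro _ rfl
      · exact Dvd.intro _ rfl
      · exact Dvd.intro_left _ rfl
      · exact ⟨k, by push_cast; linear_combination hk' - H.sq⟩
    · rw [Ideal.span_singleton_le_iff_mem]
      have a1 : (q : 𝓞 K) ∈ Ideal.span {(q : 𝓞 K), t + (1 : ℤ) * w} := Ideal.subset_span (by simp)
      have a2 : (t + (1 : ℤ) * w : 𝓞 K) ∈ Ideal.span {(q : 𝓞 K), t + (1 : ℤ) * w} :=
        Ideal.subset_span (by simp)
      have b1 : (q : 𝓞 K) ∈ Ideal.span {(q : 𝓞 K), t + (-1 : ℤ) * w} := Ideal.subset_span (by simp)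
      have b2 : (t + (-1 : ℤ) * w : 𝓞 K) ∈ Ideal.span {(q : 𝓞 K), t + (-1 : ℤ) * w} :=
        Ideal.subset_span (by simp)
      have m1 := Ideal.mul_mem_left _ (e : 𝓞 K) (Ideal.mul_mem_mul a1 b1)
      have m2 := Ideal.mul_mem_left _ (f : 𝓞 K) (Ideal.mul_mem_mul a1 b2)
      have m3 := Ideal.mul_mem_left _ (f : 𝓞 K) (Ideal.mul_mem_mul a2 b1)
      have m4 := Ideal.add_mem _ (Ideal.add_mem _ m1 m2) m3
      convert m4 using 1
      push_cast
      linear_combination (-(q : 𝓞 K)) * hef'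
  have hnq := H.nrm_nat q
  have hprod := congrArg Ideal.absNorm hmul
  rw [map_mul, hnq] at hprod
  refine ⟨Ideal.span {(q : 𝓞 K), t + (1 : ℤ) * w}, ?_⟩
  have h1 := hne 1 (by norm_num)
  have h2 := hne (-1) (by norm_num)
  have := (hq.mul_eq_prime_sq_iff h1 h2).1 hprod
  rw [this.1]; exact hq4

lemma QInt.exists_J (H : QInt p w) (x y : ℕ) (hxy : (p : ℤ) = (x : ℤ) ^ 2 - 32 * (y : ℤ) ^ 2) :
    ∃ J : Ideal (𝓞 K), Ideal.absNorm J = x + 4 * y ∧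
      P2 w * J ^ 2 = Ideal.span {((x + 8 * y : ℤ) : 𝓞 K) + (1 : ℤ) * w} := by
  have h8 := H.h8
  have hxodd : x % 2 = 1 := by
    rcases Nat.even_or_odd' x with ⟨l, hl | hl⟩
    · exfalso
      subst hl
      push_cast at hxy
      have : (p : ℤ) = 2 * (2 * l ^ 2 - 16 * y ^ 2) := by rw [hxy]; ring
      omega
    · omega
  set a : ℤ := x + 8 * y with ha
  set n : ℤ := x + 4 * y with hn
  have hpa : a ^ 2 + p = 2 * n ^ 2 := by rw [hxy, ha, hn]; ring
  have hpa' : (a ^ 2 + p : 𝓞 K) = 2 * n ^ 2 := by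
    exact_mod_cast congrArg (Int.cast (R := 𝓞 K)) hpa
  have hle : ∀ ε : ℤ, ε % 2 = 1 → P2 w ∣ Ideal.span {(a : 𝓞 K) + ε * w} := by
    intro ε hε
    rw [Ideal.dvd_iff_le, Ideal.span_singleton_le_iff_mem]
    apply mem_P2
    omega
  obtain ⟨L, hL⟩ := hle 1 (by norm_num)
  obtain ⟨L', hL'⟩ := hle (-1) (by norm_num)
  have hLL : L * L' = Ideal.span {(n : 𝓞 K)} ^ 2 := by
    apply mul_left_cancel₀ (a := P2 w * P2 w) (mul_ne_zero H.P2_ne H.P2_ne)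
    have : P2 w * P2 w * (L * L') = (P2 w * L) * (P2 w * L') := by ring
    rw [this, ← hL, ← hL', H.P2_sq, Ideal.span_singleton_mul_span_singleton, pow_two,
      Ideal.span_singleton_mul_span_singleton, Ideal.span_singleton_mul_span_singleton]
    congr 2
    push_cast
    linear_combination hpa' - H.sq
  have hcopZ : IsCoprime (n ^ 2) (2 * a) := by
    apply IsCoprime.pow_left
    have h1 : IsCoprime n a := by
      rw [Int.isCoprime_iff_gcd_eq_one]
      by_contra hc
      obtain ⟨q, hq, hqn, hqa⟩ : ∃ q : ℕ, q.Prime ∧ (q : ℤ) ∣ n ∧ (q : ℤ) ∣ a := by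
        obtain ⟨q, hq, hqd⟩ := Nat.exists_prime_and_dvd hc
        have hqd' : (q : ℤ) ∣ (Int.gcd n a : ℤ) := by exact_mod_cast hqd
        exact ⟨q, hq, hqd'.trans (Int.gcd_dvd_left ..), hqd'.trans (Int.gcd_dvd_right ..)⟩
      have hd : (q : ℤ) ^ 2 ∣ p := by
        have : (p : ℤ) = 2 * n ^ 2 - a ^ 2 := by linarith
        rw [this]
        exact dvd_sub (Dvd.dvd.mul_left (pow_dvd_pow_of_dvd hqn 2) _) (pow_dvd_pow_of_dvd hqa 2)
      have hd' : q * q ∣ p := by rw [← pow_two]; exact_mod_cast hd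
      have := Nat.isUnit_iff.1 (H.pp.prime.squarefree q hd')
      exact hq.one_lt.ne' this
    have h2 : IsCoprime n 2 := by
      refine ⟨1, -((n - 1) / 2), ?_⟩
      have : n % 2 = 1 := by omega
      omega
    exact h2.mul_right h1
  obtain ⟨e, f, hef⟩ := hcopZ
  have hef' : (e * n ^ 2 + f * (2 * a) : 𝓞 K) = 1 := by
    exact_mod_cast congrArg (Int.cast (R := 𝓞 K)) hef
  have hcop : IsCoprime L L' := by
    rw [Ideal.isCoprime_iff_sup_eq, Ideal.eq_top_iff_one, ← hef']
    have hn2 : (n ^ 2 : 𝓞 K) ∈ L * L' := by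
      rw [hLL, Ideal.span_singleton_pow]; exact Ideal.mem_span_singleton_self _
    have m1 : (n ^ 2 : 𝓞 K) ∈ L ⊔ L' := Ideal.mem_sup_left ((Ideal.mul_le_left : L * L' ≤ L) hn2)
    have m2 : ((a : 𝓞 K) + (1 : ℤ) * w) ∈ L ⊔ L' := Ideal.mem_sup_left (by
      have : ((a : 𝓞 K) + (1 : ℤ) * w) ∈ P2 w * L := by
        rw [← hL]; exact Ideal.mem_span_singleton_self _
      exact (Ideal.mul_le_right : P2 w * L ≤ L) this)
    have m3 : ((a : 𝓞 K) + (-1 : ℤ) * w) ∈ L ⊔ L' := Ideal.mem_sup_right (by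
      have : ((a : 𝓞 K) + (-1 : ℤ) * w) ∈ P2 w * L' := by
        rw [← hL']; exact Ideal.mem_span_singleton_self _
      exact (Ideal.mul_le_right : P2 w * L' ≤ L') this)
    have m4 := Ideal.add_mem _ (Ideal.mul_mem_left _ (e : 𝓞 K) m1)
      (Ideal.mul_mem_left _ (f : 𝓞 K) (Ideal.add_mem _ m2 m3))
    convert m4 using 1
    push_cast
    ring
  obtain ⟨J, hJ⟩ := exists_eq_pow_of_mul_eq_pow_of_coprime hcop hLL
  refine ⟨J, ?_, by rw [hL, hJ]⟩
  have h1 := H.nrm a 1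
  rw [hL, hJ, map_mul, map_pow] at h1
  have h2 := H.nrm_P2
  rw [h2] at h1
  have h6 : (Ideal.absNorm J : ℤ) ^ 2 = n ^ 2 := by push_cast at h1; linarith
  have h7 : (Ideal.absNorm J : ℤ) = n := by
    rwa [sq_eq_sq₀ (by positivity) (by positivity)] at h6
  rw [hn] at h7
  exact_mod_cast h7

lemma QInt.P2_not_principal (H : QInt p w) : ¬ (P2 w).IsPrincipal := by
  rintro ⟨z, hz⟩
  obtain ⟨c, d, rfl⟩ := H.rep z
  have h2 := H.nrm_P2
  have h1 := H.nrm c d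
  rw [← Ideal.submodule_span_eq, ← hz, h2] at h1
  have hp8 := H.h8
  have hp2 := H.pp.two_le
  have hp : (8 : ℤ) < p := by omega
  have hd : d = 0 := by
    by_contra hd
    have : 1 ≤ d ^ 2 := by have := sq_pos_of_ne_zero hd; omega
    push_cast at h1
    nlinarith [sq_nonneg c]
  subst hd
  have hc : c ^ 2 = 2 := by push_cast at h1; linarith
  have : c < 2 := by nlinarith
  have : -2 < c := by nlinarith
  interval_cases c <;> omega

lemma mk0_one_of (I : (Ideal (𝓞 K))⁰) (g : 𝓞 K) (h : (I : Ideal (𝓞 K)) = Ideal.span {g}) :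
    ClassGroup.mk0 I = 1 :=
  (ClassGroup.mk0_eq_one_iff I.2).2 ⟨g, h⟩

lemma of_mk0_one (I : (Ideal (𝓞 K))⁰) (h : ClassGroup.mk0 I = 1) :
    ∃ g : 𝓞 K, (I : Ideal (𝓞 K)) = Ideal.span {g} := by
  obtain ⟨g, hg⟩ := (ClassGroup.mk0_eq_one_iff I.2).1 h
  exact ⟨g, hg⟩

theorem QInt.main (H : QInt p w) (x y : ℕ) (hxy : (p : ℤ) = (x : ℤ) ^ 2 - 32 * (y : ℤ) ^ 2) :
    x % 4 = 3 ↔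
      (∀ c : ClassGroup (𝓞 K), c ^ 2 = 1 → (∃ b, c = b ^ 4) → c = 1) := by
  have h8 := H.h8
  have hxodd : x % 2 = 1 := by
    rcases Nat.even_or_odd' x with ⟨l, hl | hl⟩
    · exfalso
      subst hl
      push_cast at hxy
      have : (p : ℤ) = 2 * (2 * l ^ 2 - 16 * y ^ 2) := by rw [hxy]; ring
      omega
    · omega
  obtain ⟨J, hJn, hJ⟩ := H.exists_J x y hxy
  have mk : ∀ I : Ideal (𝓞 K), I ≠ ⊥ → I ∈ (Ideal (𝓞 K))⁰ :=
    fun I hI => mem_nonZeroDivisors_of_ne_zero hI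
  have hJ0 : J ≠ ⊥ := by rw [Ne, ← Ideal.absNorm_eq_zero_iff]; omega
  let Jz : (Ideal (𝓞 K))⁰ := ⟨J, mk J hJ0⟩
  let Pz : (Ideal (𝓞 K))⁰ := ⟨P2 w, mk _ H.P2_ne⟩
  set j := ClassGroup.mk0 Jz with hj
  set P := ClassGroup.mk0 Pz with hP
  have hPj : P * j ^ 2 = 1 := by
    have h := mk0_one_of (Pz * Jz ^ 2) _ (by rw [Submonoid.coe_mul, SubmonoidClass.coe_pow]; exact hJ)
    rwa [map_mul, map_pow] at h
  have hPP : P * P = 1 := by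
    have h := mk0_one_of (Pz * Pz) _ (by rw [Submonoid.coe_mul]; exact H.P2_sq)
    rwa [map_mul] at h
  have hP1 : P ≠ 1 := by
    intro h
    exact H.P2_not_principal ((ClassGroup.mk0_eq_one_iff Pz.2).1 h)
  have htors : ∀ c : ClassGroup (𝓞 K), c ^ 2 = 1 → c = 1 ∨ c = P := by
    intro c hc
    obtain ⟨I, rfl⟩ := ClassGroup.mk0_surjective c
    rw [pow_two, ← map_mul] at hc
    obtain ⟨α, hα⟩ := of_mk0_one (I * I) hc
    rw [Submonoid.coe_mul] at hα
    obtain ⟨x, y, hx, hy, h | h⟩ := H.two_torsion I (nonZeroDivisors.ne_zero I.2) α hα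
    · left
      rw [← map_one (ClassGroup.mk0 (R := 𝓞 K)), ClassGroup.mk0_eq_mk0_iff]
      exact ⟨x, y, hx, hy, by simpa using h⟩
    · right
      rw [hP, ClassGroup.mk0_eq_mk0_iff]
      exact ⟨x, y, hx, hy, h⟩
  have hPinv : P = j ^ 2 := by
    calc P = P * (P * j ^ 2) := by rw [hPj, mul_one]
      _ = j ^ 2 := by rw [← mul_assoc, hPP, one_mul]
  have hJgen : ∀ b, j = b ^ 2 → x % 4 = 1 := by
    intro b hb
    have h := H.genus Jz b hb
    simp only [Jz, hJn] at h
    have := h (by omega)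
    omega
  constructor
  · intro hx3 c hc ⟨b, hb⟩
    rcases htors c hc with h | h
    · exact h
    · exfalso
      have h1 : (j * (b ^ 2)⁻¹) ^ 2 = 1 := by
        rw [mul_pow, ← hPinv, ← h, hb]; group
      rcases htors _ h1 with h2 | h2
      · have := hJgen b (by rwa [mul_inv_eq_one] at h2)
        omega
      · have := hJgen (b ^ 3) (by
          rw [mul_inv_eq_iff_eq_mul, ← h, hb] at h2
          rw [h2]; group)
        omega
  · intro hyp
    by_contra hx3
    have hx1 : x % 4 = 1 := by omega
    have key : ∃ b, b ^ 2 = j := by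
      by_contra hns
      obtain ⟨I, hI⟩ := H.exists_I
      have hI0 : I ≠ ⊥ := by rw [Ne, ← Ideal.absNorm_eq_zero_iff]; omega
      let Iz : (Ideal (𝓞 K))⁰ := ⟨I, mk I hI0⟩
      let f : ClassGroup (𝓞 K) →* ClassGroup (𝓞 K) := powMonoidHom 2
      have hidx : f.range.index = 2 := by
        rw [Subgroup.index_range, Nat.card_eq_two_iff]
        refine ⟨1, ⟨P, by simp [f, MonoidHom.mem_ker, pow_two, hPP]⟩, ?_, ?_⟩
        · intro h
          exact hP1 (congrArg Subtype.val h).symm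
        · ext ⟨c, hc⟩
          have : c ^ 2 = 1 := hc
          rcases htors c this with h | h <;> simp [h]
      have h1 : ¬ ClassGroup.mk0 Iz ∈ f.range := by
        rintro ⟨b, hb⟩
        have h := H.genus Iz b hb.symm
        simp only [Iz] at h
        omega
      have h2 : ¬ j ∈ f.range := by
        rintro ⟨b, hb⟩
        exact hns ⟨b, hb⟩
      have h3 : ClassGroup.mk0 Iz * j ∈ f.range :=
        (Subgroup.mul_mem_iff_of_index_two hidx).2 (by simp [h1, h2])
      obtain ⟨b, hb⟩ := h3
      rw [hj, ← map_mul] at hb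
      have h := H.genus (Iz * Jz) b hb.symm
      have e : Ideal.absNorm ((Iz * Jz : (Ideal (𝓞 K))⁰) : Ideal (𝓞 K)) =
        Ideal.absNorm I * (x + 4 * y) := by simp [Iz, Jz, hJn]
      rw [e] at h
      have e4 : (Ideal.absNorm I * (x + 4 * y)) % 4 = 3 := by
        rw [Nat.mul_mod, hI, show (x + 4 * y) % 4 = 1 by omega]
      omega
    obtain ⟨b, hb⟩ := key
    refine hP1 (hyp P (by rw [pow_two, hPP]) ⟨b, ?_⟩)
    rw [hPinv, ← hb, ← pow_mul]

end ctx

/-- for a prime `p ≡ 1 (mod 8)` with `p = x² − 32y²` (`x, y > 0`) and `A` the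
ideal class group of `ℚ(√−p)`, one has `x ≡ 3 (mod 4)` iff `A[2] ∩ 4A` is trivial
(i.e. `h₈(p) = 0`). -/
theorem stmt_15 (p : ℕ) (hp : p.Prime) (h8 : p % 8 = 1)
    (x y : ℕ) (hx : 0 < x) (hy : 0 < y)
    (hxy : (p : ℤ) = (x : ℤ) ^ 2 - 32 * (y : ℤ) ^ 2)
    (K : Type) [Field K] [NumberField K] (hdeg : Module.finrank ℚ K = 2)
    (s : K) (hs : s ^ 2 = -(p : K)) :
    x % 4 = 3 ↔
      (∀ c : ClassGroup (𝓞 K), c ^ 2 = 1 → (∃ b, c = b ^ 4) → c = 1) := by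
  obtain ⟨w, h1, h2, h3⟩ := quad_int p hp h8 K hdeg s hs
  exact QInt.main ⟨hp, h8, h1, h2, h3⟩ x y hxy
end
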